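/- Let 0 < α < 1 and T > 0, and let (u, p) be a strong solution of the Navier–Stokes equations on [0,T) × ℝ³ (smooth, divergence-free, with u(t,·) and p(t,·) Schwartz in x, locally uniformly in t), with vorticity ω = curl u. There exists a constant C > 0 (independent of u) such that if K := ∫₀ᵀ (‖ω(τ,·)‖_{Ḃ^{−α}_{∞,∞}}^{2/(2−α)} + ‖ω(τ,·)‖_{Ḃ^{−1−α}_{∞,∞}}^{2/(1−α)}) dτ < ∞, then for every t ∈ [0,T): ‖ω(t,·)‖_{L²} ≤ ‖ω(0,·)‖_{L²} exp(C K), and consequently sup_{0≤t<T} (‖u(t,·)‖_{L²} + ‖∇u(t,·)‖_{L²}) ≤ ‖u(0,·)‖_{L²} + ‖ω(0,·)‖_{L²} exp(C K) < ∞. (This is the a priori H¹ bound underlying the blow-up criterion of Theorem 3.1: under the stated integral condition on the vorticity, the H¹ norm of the solution stays bounded up to time T, so the solution can be continued beyond T.) -/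

import Mathlib

open MeasureTheory Real Complex Filter Function
open scoped ENNReal FourierTransform SchwartzMap

noncomputable section

/-- The properties of the radial smooth cutoff `χ` used to build the
Littlewood–Paley decomposition: smooth, compactly supported, radial,
`0 ≤ χ ≤ 1`, `χ = 1` on `{‖ξ‖ ≤ 3/4}` and `χ = 0` on `{‖ξ‖ > 4/3}`. -/
def IsLPCutoff {n : ℕ} (χ : EuclideanSpace ℝ (Fin n) → ℝ) : Prop :=
  ContDiff ℝ ((⊤ : ℕ∞) : WithTop ℕ∞) χ ∧ HasCompactSupport χ ∧
    (∀ ξ η, ‖ξ‖ = ‖η‖ → χ ξ = χ η) ∧ (∀ ξ, 0 ≤ χ ξ) ∧ (∀ ξ, χ ξ ≤ 1) ∧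
    (∀ ξ, ‖ξ‖ ≤ 3 / 4 → χ ξ = 1) ∧ (∀ ξ, 4 / 3 < ‖ξ‖ → χ ξ = 0)

/-- The low-frequency Littlewood–Paley projection `S_j f = 𝓕⁻¹(χ(·/2^j) 𝓕 f)`. -/
def Sproj {n : ℕ} (χ : EuclideanSpace ℝ (Fin n) → ℝ) (j : ℤ)
    (f : EuclideanSpace ℝ (Fin n) → ℂ) : EuclideanSpace ℝ (Fin n) → ℂ :=
  𝓕⁻ fun ξ => ((χ ((2 : ℝ) ^ (-j) • ξ) : ℝ) : ℂ) * 𝓕 f ξ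

/-- The Littlewood–Paley block `Δ_j f = 𝓕⁻¹(φ̂(·/2^j) 𝓕 f)`, where
`φ̂(ξ) = χ(ξ/2) - χ(ξ)`, i.e. `φ̂(ξ/2^j) = χ(ξ/2^(j+1)) - χ(ξ/2^j)`. -/
def Dproj {n : ℕ} (χ : EuclideanSpace ℝ (Fin n) → ℝ) (j : ℤ)
    (f : EuclideanSpace ℝ (Fin n) → ℂ) : EuclideanSpace ℝ (Fin n) → ℂ :=
  𝓕⁻ fun ξ => ((χ ((2 : ℝ) ^ (-(j + 1)) • ξ) - χ ((2 : ℝ) ^ (-j) • ξ) : ℝ) : ℂ) * 𝓕 f ξ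

/-- The `ℓ^q(ℤ)` norm of a sequence of extended nonnegative reals, with the usual
supremum modification for `q = ∞`. -/
def lqNorm (q : ℝ≥0∞) (a : ℤ → ℝ≥0∞) : ℝ≥0∞ :=
  if q = ∞ then ⨆ j, a j else (∑' j, a j ^ q.toReal) ^ (1 / q.toReal)

/-- The homogeneous Besov norm `‖f‖_{Ḃ^s_{p,q}}`, valued in `[0,∞]`. -/
def besovNorm {n : ℕ} (χ : EuclideanSpace ℝ (Fin n) → ℝ) (s : ℝ) (p q : ℝ≥0∞)
    (f : EuclideanSpace ℝ (Fin n) → ℂ) : ℝ≥0∞ :=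
  lqNorm q fun j => (2 : ℝ≥0∞) ^ ((j : ℝ) * s) * eLpNorm (Dproj χ j f) p volume
noncomputable section

/-- Abbreviation for the Euclidean space `ℝ³`. -/
abbrev E3 := EuclideanSpace ℝ (Fin 3)

/-- The partial derivative `∂ᵢ f` in the `i`-th coordinate direction. -/
def pd (i : Fin 3) (f : E3 → ℝ) : E3 → ℝ :=
  fun x => fderiv ℝ f x (EuclideanSpace.single i 1)

/-- The curl `∇ × u = (∂₂u³ - ∂₃u², ∂₃u¹ - ∂₁u³, ∂₁u² - ∂₂u¹)` of a vector field on `ℝ³`. -/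
def curl3 (u : Fin 3 → E3 → ℝ) : Fin 3 → E3 → ℝ :=
  ![fun x => pd 1 (u 2) x - pd 2 (u 1) x,
    fun x => pd 2 (u 0) x - pd 0 (u 2) x,
    fun x => pd 0 (u 1) x - pd 1 (u 0) x]

/-- The curl of a Schwartz vector field on `ℝ³`. -/
def curlS (u : Fin 3 → 𝓢(E3, ℝ)) : Fin 3 → E3 → ℝ :=
  curl3 fun i => ⇑(u i)

/-- The `L²` norm of a vector field (the `ℓ²` combination of the componentwise norms),
valued in `[0,∞]`. -/
def vecL2 (v : Fin 3 → E3 → ℝ) : ℝ≥0∞ :=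
  (∑ i : Fin 3, eLpNorm (v i) 2 volume ^ (2 : ℝ)) ^ (1 / 2 : ℝ)

/-- The `L²` norm `‖∇v‖_{L²}` of the gradient of a vector field,
`‖∇v‖_{L²}² = Σ_{i,j} ‖∂ᵢ vʲ‖_{L²}²`, valued in `[0,∞]`. -/
def gradL2 (v : Fin 3 → E3 → ℝ) : ℝ≥0∞ :=
  (∑ i : Fin 3, ∑ j : Fin 3, eLpNorm (pd i (v j)) 2 volume ^ (2 : ℝ)) ^ (1 / 2 : ℝ)

/-- The homogeneous Besov norm `‖v‖_{Ḃ^s_{∞,∞}} = sup_j 2^{js} ‖Δ_j v‖_{L^∞}` of a real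
vector field on `ℝ³`, taken as the maximum (supremum) over the components. -/
def vecBesovInf (χ : E3 → ℝ) (s : ℝ) (v : Fin 3 → E3 → ℝ) : ℝ≥0∞ :=
  ⨆ i : Fin 3, ⨆ j : ℤ,
    (2 : ℝ≥0∞) ^ ((j : ℝ) * s) * eLpNorm (Dproj χ j fun x => ((v i x : ℝ) : ℂ)) ⊤ volume

/-- The homogeneous Besov norm `Ḃ^s_{2,2}` of a 3×3-matrix field, as the `ℓ²`
combination of the componentwise Besov norms. -/
def matBesov22 (χ : E3 → ℝ) (s : ℝ) (m : Fin 3 → Fin 3 → E3 → ℝ) : ℝ≥0∞ :=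
  (∑ i : Fin 3, ∑ j : Fin 3,
      besovNorm χ s 2 2 (fun x => ((m i j x : ℝ) : ℂ)) ^ (2 : ℝ)) ^ (1 / 2 : ℝ)

/-- The `L²` norm of `Λ^α v`, where `Λ^α f = 𝓕⁻¹(|ξ|^α 𝓕 f)` acts componentwise on the
real vector field `v`, taken as the `ℓ²` combination of the componentwise norms. -/
def vecFracLapL2 (α : ℝ) (v : Fin 3 → E3 → ℝ) : ℝ≥0∞ :=
  (∑ i : Fin 3,
      eLpNorm (𝓕⁻ fun ξ => ((‖ξ‖ ^ α : ℝ) : ℂ) * 𝓕 (fun x => ((v i x : ℝ) : ℂ)) ξ) 2 volume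
        ^ (2 : ℝ)) ^ (1 / 2 : ℝ)

/-- The vortex-stretching integral `∫ ((ω·∇)u)·ω dx` of a Schwartz vector field `u`
with vorticity `ω = curl u`. -/
def vortexStretch (u : Fin 3 → 𝓢(E3, ℝ)) : ℝ :=
  ∫ x, ∑ j : Fin 3, (∑ i : Fin 3, curlS u i x * pd i (⇑(u j)) x) * curlS u j x

/-- A **strong solution of the Navier–Stokes equations** on `[0,T) × ℝ³`: the velocity
`u` and the pressure `p` are smooth on `[0,T) × ℝ³` and Schwartz in the space variable
with all Schwartz seminorms locally bounded in time, `u(t,·)` is divergence-free, and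
`∂ₜu - Δu + (u·∇)u + ∇p = 0` on `(0,T) × ℝ³`. -/
structure IsStrongSolution (T : ℝ) (u : ℝ → Fin 3 → 𝓢(E3, ℝ)) (p : ℝ → 𝓢(E3, ℝ)) :
    Prop where
  smooth_u : ∀ i : Fin 3, ContDiffOn ℝ ((⊤ : ℕ∞) : WithTop ℕ∞)
    (fun tx : ℝ × E3 => u tx.1 i tx.2) (Set.Ico 0 T ×ˢ Set.univ)
  smooth_p : ContDiffOn ℝ ((⊤ : ℕ∞) : WithTop ℕ∞)
    (fun tx : ℝ × E3 => p tx.1 tx.2) (Set.Ico 0 T ×ˢ Set.univ)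
  locBdd_u : ∀ k l : ℕ, ∀ t ∈ Set.Ico (0 : ℝ) T, ∃ ε > 0, ∃ M : ℝ,
    ∀ s ∈ Set.Ico (0 : ℝ) T, |s - t| < ε → ∀ i, SchwartzMap.seminorm ℝ k l (u s i) ≤ M
  locBdd_p : ∀ k l : ℕ, ∀ t ∈ Set.Ico (0 : ℝ) T, ∃ ε > 0, ∃ M : ℝ,
    ∀ s ∈ Set.Ico (0 : ℝ) T, |s - t| < ε → SchwartzMap.seminorm ℝ k l (p s) ≤ M
  divFree : ∀ t ∈ Set.Ico (0 : ℝ) T, ∀ x, ∑ i : Fin 3, pd i (⇑(u t i)) x = 0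
  eqn : ∀ t ∈ Set.Ioo (0 : ℝ) T, ∀ x, ∀ j : Fin 3,
    deriv (fun s => u s j x) t - (∑ i : Fin 3, pd i (pd i (⇑(u t j))) x)
      + (∑ i : Fin 3, u t i x * pd i (⇑(u t j)) x) + pd j (⇑(p t)) x = 0

/-- The space-time integral `∫₀ᵀ (‖ω(τ)‖_{Ḃ^{-α}_{∞,∞}}^{2/(2-α)} +
‖ω(τ)‖_{Ḃ^{-1-α}_{∞,∞}}^{2/(1-α)}) dτ` of the vorticity `ω = curl u`. -/
def vortBesovIntegral (χ : E3 → ℝ) (α T : ℝ) (u : ℝ → Fin 3 → 𝓢(E3, ℝ)) : ℝ≥0∞ :=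
  ∫⁻ τ in Set.Ioo (0 : ℝ) T,
    vecBesovInf χ (-α) (curlS (u τ)) ^ (2 / (2 - α))
      + vecBesovInf χ (-1 - α) (curlS (u τ)) ^ (2 / (1 - α))

open scoped LineDeriv Topology

/-- The standard coordinate vector `eᵢ` of `ℝ³`. -/
abbrev basisVec (i : Fin 3) : E3 := EuclideanSpace.single i 1

section L2

variable {F : Type*} [NormedAddCommGroup F] [NormedSpace ℝ F]

/-- The `L²` norm of a Schwartz function on `ℝ³`. -/
def l2norm (f : 𝓢(E3, F)) : ℝ := ‖f.toLp 2‖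

lemma l2norm_nonneg (f : 𝓢(E3, F)) : 0 ≤ l2norm f := norm_nonneg _

lemma l2norm_sq (f : 𝓢(E3, F)) : l2norm f ^ 2 = ∫ x, ‖f x‖ ^ 2 := by
  have h := SchwartzMap.norm_toLp' (f := f) (p := 2) (μ := volume) (by simp) (by simp)
  have h0 : 0 ≤ ∫ x, ‖f x‖ ^ 2 := integral_nonneg fun x => by positivity
  simp only [ENNReal.toReal_ofNat, Real.rpow_ofNat] at h
  rw [l2norm, h, ← Real.rpow_natCast, ← Real.rpow_mul h0]
  norm_num

lemma l2norm_eq_sqrt (f : 𝓢(E3, F)) : l2norm f = √(∫ x, ‖f x‖ ^ 2) := by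
  rw [← l2norm_sq, Real.sqrt_sq (l2norm_nonneg f)]

lemma l2norm_sub_le (f g h : 𝓢(E3, F)) :
    l2norm (f - h) ≤ l2norm (f - g) + l2norm (h - g) := by
  have e : (f - h).toLp 2 (volume : Measure E3) =
      (f - g).toLp 2 (volume : Measure E3) - (h - g).toLp 2 (volume : Measure E3) := by
    rw [← sub_sub_sub_cancel_right f h g]
    exact map_sub (SchwartzMap.toLpCLM ℝ F 2 volume (E := E3)) _ _
  rw [l2norm, e]
  exact norm_sub_le _ _

lemma integrable_norm_sq (f : 𝓢(E3, F)) : Integrable fun x => ‖f x‖ ^ 2 :=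
  (f.memLp 2).integrable_norm_pow (by simp)

lemma integral_norm_mul_norm_le {G : Type*} [NormedAddCommGroup G] [NormedSpace ℝ G]
    (f : 𝓢(E3, F)) (g : 𝓢(E3, G)) :
    ∫ x, ‖f x‖ * ‖g x‖ ≤ l2norm f * l2norm g := by
  have h := integral_mul_le_Lp_mul_Lq_of_nonneg (μ := (volume : Measure E3))
    (f := fun x => ‖f x‖) (g := fun x => ‖g x‖) Real.HolderConjugate.two_two
    (ae_of_all _ fun x => norm_nonneg _) (ae_of_all _ fun x => norm_nonneg _)
    (by simpa using (f.memLp 2).norm) (by simpa using (g.memLp 2).norm)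
  simpa only [l2norm_eq_sqrt, Real.sqrt_eq_rpow, Real.rpow_ofNat] using h

lemma integrable_norm_mul_norm {G : Type*} [NormedAddCommGroup G] [NormedSpace ℝ G]
    (f : 𝓢(E3, F)) (g : 𝓢(E3, G)) : Integrable fun x => ‖f x‖ * ‖g x‖ :=
  MemLp.integrable_mul (p := 2) (q := 2) (f.memLp 2).norm (g.memLp 2).norm

end L2

lemma norm_integral_mul_mul_le {a b c : 𝓢(E3, ℂ)} {L : ℝ} (hL : ∀ x, ‖a x‖ ≤ L) :
    ‖∫ x, a x * b x * c x‖ ≤ L * l2norm b * l2norm c := by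
  have hL0 : 0 ≤ L := (norm_nonneg _).trans (hL 0)
  calc ‖∫ x, a x * b x * c x‖ ≤ ∫ x, L * (‖b x‖ * ‖c x‖) := by
        refine norm_integral_le_of_norm_le ((integrable_norm_mul_norm b c).const_mul L)
          (ae_of_all _ fun x => ?_)
        rw [norm_mul, norm_mul, mul_assoc]
        exact mul_le_mul_of_nonneg_right (hL x) (by positivity)
    _ ≤ L * l2norm b * l2norm c := by
        rw [integral_const_mul, mul_assoc]
        exact mul_le_mul_of_nonneg_left (integral_norm_mul_norm_le b c) hL0

lemma integrable_mul_mul (a b c : 𝓢(E3, ℂ)) : Integrable fun x => a x * b x * c x := by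
  refine ((integrable_norm_mul_norm b c).const_mul (SchwartzMap.seminorm ℝ 0 0 a)).mono'
    (by fun_prop) (ae_of_all _ fun x => ?_)
  rw [norm_mul, norm_mul, mul_assoc]
  exact mul_le_mul_of_nonneg_right (SchwartzMap.norm_le_seminorm ℝ a x) (by positivity)

section LowPass

variable {χ : E3 → ℝ}

lemma IsLPCutoff.hasTemperateGrowth_comp_smul (hχ : IsLPCutoff χ) (c : ℝ) :
    Function.HasTemperateGrowth fun ξ : E3 => ((χ (c • ξ) : ℝ) : ℂ) := by
  have h1 : χ.HasTemperateGrowth := HasCompactSupport.hasTemperateGrowth hχ.2.1 hχ.1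
  have h2 : Function.HasTemperateGrowth fun ξ : E3 => c • ξ :=
    (c • ContinuousLinearMap.id ℝ E3).hasTemperateGrowth
  exact Complex.hasTemperateGrowth_ofReal.comp (h1.comp h2)

variable (χ) in
/-- The low-frequency projection `S_N` as a map of Schwartz functions. -/
def lowPass (N : ℤ) (f : 𝓢(E3, ℂ)) : 𝓢(E3, ℂ) :=
  SchwartzMap.fourierMultiplierCLM ℂ (fun ξ : E3 => ((χ ((2 : ℝ) ^ (-N) • ξ) : ℝ) : ℂ)) f

lemma fourier_lowPass (hχ : IsLPCutoff χ) (N : ℤ) (f : 𝓢(E3, ℂ)) (ξ : E3) :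
    𝓕 (lowPass χ N f) ξ = ((χ ((2 : ℝ) ^ (-N) • ξ) : ℝ) : ℂ) * 𝓕 f ξ := by
  rw [lowPass, SchwartzMap.fourierMultiplierCLM_apply, FourierTransform.fourier_fourierInv_eq,
    SchwartzMap.smulLeftCLM_apply_apply (hχ.hasTemperateGrowth_comp_smul _), smul_eq_mul]

lemma lowPass_eq (hχ : IsLPCutoff χ) (N : ℤ) (f : 𝓢(E3, ℂ)) :
    ⇑(lowPass χ N f) = 𝓕⁻ fun ξ => ((χ ((2 : ℝ) ^ (-N) • ξ) : ℝ) : ℂ) * 𝓕 f ξ := by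
  rw [lowPass, SchwartzMap.fourierMultiplierCLM_apply, SchwartzMap.fourierInv_coe]
  congr 1
  ext ξ
  rw [SchwartzMap.smulLeftCLM_apply_apply (hχ.hasTemperateGrowth_comp_smul _), smul_eq_mul]

lemma Dproj_eq (hχ : IsLPCutoff χ) (j : ℤ) (f : 𝓢(E3, ℂ)) :
    Dproj χ j f = ⇑(lowPass χ (j + 1) f - lowPass χ j f) := by
  have h : lowPass χ (j + 1) f - lowPass χ j f = 𝓕⁻ (𝓕 (lowPass χ (j + 1) f - lowPass χ j f)) :=
    (FourierTransform.fourierInv_fourier_eq _).symm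
  rw [h, SchwartzMap.fourierInv_coe, Dproj]
  congr 1
  ext ξ
  rw [show 𝓕 (lowPass χ (j + 1) f - lowPass χ j f) =
    𝓕 (lowPass χ (j + 1) f) - 𝓕 (lowPass χ j f) from
      map_sub (FourierTransform.fourierCLM ℂ 𝓢(E3, ℂ)) _ _, sub_apply,
    fourier_lowPass hχ, fourier_lowPass hχ, SchwartzMap.fourier_coe]
  push_cast
  ring

lemma l2norm_lowPass_le (hχ : IsLPCutoff χ) (N : ℤ) (f : 𝓢(E3, ℂ)) :
    l2norm (lowPass χ N f) ≤ l2norm f := by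
  refine le_of_sq_le_sq ?_ (l2norm_nonneg f)
  rw [l2norm_sq, l2norm_sq, ← SchwartzMap.integral_norm_sq_fourier,
    ← SchwartzMap.integral_norm_sq_fourier f]
  refine integral_mono (integrable_norm_sq _) (integrable_norm_sq _) fun ξ => ?_
  obtain ⟨-, -, -, h0, h1, -⟩ := id hχ
  simp only [fourier_lowPass hχ, norm_mul, Complex.norm_real, Real.norm_eq_abs]
  have := h0 ((2 : ℝ) ^ (-N) • ξ)
  have := h1 ((2 : ℝ) ^ (-N) • ξ)
  rw [abs_of_nonneg (by assumption)]
  gcongr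
  exact mul_le_of_le_one_left (norm_nonneg _) this

/-- The `L²` norm of the gradient of a Schwartz function. -/
def gradNorm {F : Type*} [NormedAddCommGroup F] [NormedSpace ℝ F] (f : 𝓢(E3, F)) : ℝ :=
  √(∑ i, l2norm (∂_{basisVec i} f) ^ 2)

lemma gradNorm_sq {F : Type*} [NormedAddCommGroup F] [NormedSpace ℝ F] (f : 𝓢(E3, F)) :
    gradNorm f ^ 2 = ∑ i, l2norm (∂_{basisVec i} f) ^ 2 :=
  Real.sq_sqrt (Finset.sum_nonneg fun _ _ => sq_nonneg _)

lemma gradNorm_nonneg {F : Type*} [NormedAddCommGroup F] [NormedSpace ℝ F] (f : 𝓢(E3, F)) :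
    0 ≤ gradNorm f := Real.sqrt_nonneg _

lemma norm_sq_mul_norm_fourier_sq_le (f : 𝓢(E3, ℂ)) (ξ : E3) :
    ‖ξ‖ ^ 2 * ‖𝓕 f ξ‖ ^ 2 ≤ ∑ i, ‖𝓕 (∂_{basisVec i} f) ξ‖ ^ 2 := by
  rw [EuclideanSpace.real_norm_sq_eq, Finset.sum_mul]
  refine Finset.sum_le_sum fun i _ => ?_
  rw [SchwartzMap.fourier_lineDerivOp_eq, smul_apply,
    SchwartzMap.smulLeftCLM_apply_apply (Function.hasTemperateGrowth_inner_left _)]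
  have hpi : (1 : ℝ) ≤ 2 * π := by linarith [Real.pi_gt_three]
  simp only [basisVec, EuclideanSpace.inner_single_right, smul_eq_mul, norm_mul, norm_smul]
  simp only [Complex.norm_ofNat, Complex.norm_real, Complex.norm_I, mul_one,
    Real.norm_eq_abs, mul_pow, abs_of_pos Real.pi_pos, conj_trivial, sq_abs]
  have h : 0 ≤ ξ i ^ 2 * ‖𝓕 f ξ‖ ^ 2 := by positivity
  have : 1 ≤ 2 ^ 2 * π ^ 2 := by nlinarith
  nlinarith

lemma l2norm_lowPass_sub_le (hχ : IsLPCutoff χ) (N : ℤ) (f : 𝓢(E3, ℂ)) :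
    l2norm (lowPass χ N f - f) ≤ 2 * (2 : ℝ) ^ (-N) * gradNorm f := by
  obtain ⟨-, -, -, h0, h1, h2, -⟩ := id hχ
  have hN : (0 : ℝ) < (2 : ℝ) ^ (-N) := by positivity
  refine le_of_sq_le_sq ?_ (mul_nonneg (by positivity) (gradNorm_nonneg f))
  have key : ∀ ξ, ‖𝓕 (lowPass χ N f - f) ξ‖ ^ 2 ≤
      (2 * (2 : ℝ) ^ (-N)) ^ 2 * ∑ i, ‖𝓕 (∂_{basisVec i} f) ξ‖ ^ 2 := by
    intro ξ
    have hb : |χ ((2 : ℝ) ^ (-N) • ξ) - 1| ≤ 2 * (2 : ℝ) ^ (-N) * ‖ξ‖ := by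
      have hn : ‖(2 : ℝ) ^ (-N) • ξ‖ = (2 : ℝ) ^ (-N) * ‖ξ‖ := by
        rw [norm_smul, Real.norm_of_nonneg hN.le]
      by_cases h : ‖(2 : ℝ) ^ (-N) • ξ‖ ≤ 3 / 4
      · rw [h2 _ h]
        simp only [sub_self, abs_zero]
        positivity
      · rw [abs_le]
        constructor <;> linarith [h0 ((2 : ℝ) ^ (-N) • ξ), h1 ((2 : ℝ) ^ (-N) • ξ)]
    have e : 𝓕 (lowPass χ N f - f) ξ = ((χ ((2 : ℝ) ^ (-N) • ξ) - 1 : ℝ) : ℂ) * 𝓕 f ξ := by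
      rw [show 𝓕 (lowPass χ N f - f) = 𝓕 (lowPass χ N f) - 𝓕 f from
        map_sub (FourierTransform.fourierCLM ℂ 𝓢(E3, ℂ)) _ _, sub_apply, fourier_lowPass hχ]
      push_cast
      ring
    rw [e, norm_mul, Complex.norm_real, Real.norm_eq_abs]
    calc (|χ ((2 : ℝ) ^ (-N) • ξ) - 1| * ‖𝓕 f ξ‖) ^ 2
        ≤ (2 * (2 : ℝ) ^ (-N) * ‖ξ‖ * ‖𝓕 f ξ‖) ^ 2 := by gcongr
      _ = (2 * (2 : ℝ) ^ (-N)) ^ 2 * (‖ξ‖ ^ 2 * ‖𝓕 f ξ‖ ^ 2) := by ring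
      _ ≤ _ := by gcongr; exact norm_sq_mul_norm_fourier_sq_le f ξ
  rw [mul_pow, gradNorm_sq, l2norm_sq, ← SchwartzMap.integral_norm_sq_fourier]
  calc ∫ ξ, ‖𝓕 (lowPass χ N f - f) ξ‖ ^ 2
      ≤ ∫ ξ, (2 * (2 : ℝ) ^ (-N)) ^ 2 * ∑ i, ‖𝓕 (∂_{basisVec i} f) ξ‖ ^ 2 :=
        integral_mono (integrable_norm_sq _)
          ((integrable_finsetSum _ fun i _ => integrable_norm_sq _).const_mul _) key
    _ = _ := by
        rw [integral_const_mul, integral_finsetSum _ fun i _ => integrable_norm_sq _]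
        simp only [SchwartzMap.integral_norm_sq_fourier, l2norm_sq]

lemma tendsto_lowPass_sub_nat (hχ : IsLPCutoff χ) (N : ℤ) (f : 𝓢(E3, ℂ)) (x : E3) :
    Tendsto (fun k : ℕ => lowPass χ (N - k) f x) atTop (𝓝 0) := by
  obtain ⟨-, -, -, h0, h1, -, h3⟩ := id hχ
  simp only [lowPass_eq hχ, Real.fourierInv_eq']
  have hz : (0 : ℂ) = ∫ _ : E3, (0 : ℂ) := by simp
  rw [hz]
  refine tendsto_integral_of_dominated_convergence (fun ξ => ‖𝓕 f ξ‖) (fun k => ?_)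
    (𝓕 f).integrable.norm (fun k => ae_of_all _ fun ξ => ?_) ?_
  · have := (hχ.hasTemperateGrowth_comp_smul ((2 : ℝ) ^ (-(N - (k : ℤ))))).1.continuous
    have h4 : Continuous fun ξ : E3 => 𝓕 (⇑f) ξ := (𝓕 f).continuous
    exact Continuous.aestronglyMeasurable (by fun_prop)
  · rw [norm_smul, Complex.norm_exp_ofReal_mul_I, one_mul, norm_mul, Complex.norm_real,
      Real.norm_of_nonneg (h0 _)]
    exact mul_le_of_le_one_left (norm_nonneg _) (h1 _)
  · have hne : ∀ᵐ ξ : E3, ξ ≠ 0 := by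
      simp [ae_iff]
    filter_upwards [hne] with ξ hξ
    refine tendsto_const_nhds.congr' ?_
    have ht : Tendsto (fun k : ℕ => (2 : ℝ) ^ k * ((2 : ℝ) ^ (-N) * ‖ξ‖)) atTop atTop :=
      (tendsto_pow_atTop_atTop_of_one_lt one_lt_two).atTop_mul_const
        (mul_pos (by positivity) (norm_pos_iff.2 hξ))
    filter_upwards [ht.eventually_gt_atTop (4 / 3)] with k hk
    have : χ ((2 : ℝ) ^ (-(N - (k : ℤ))) • ξ) = 0 := by
      refine h3 _ ?_
      rw [norm_smul, Real.norm_of_nonneg (by positivity), neg_sub, sub_eq_add_neg,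
        zpow_add₀ two_ne_zero, zpow_natCast, mul_assoc]
      exact hk
    rw [this]
    simp

lemma rpow_int_add_one_mul (N : ℤ) (a : ℝ) :
    (2 : ℝ) ^ (((N + 1 : ℤ) : ℝ) * a) = (2 : ℝ) ^ ((N : ℝ) * a) * (2 : ℝ) ^ a := by
  rw [← Real.rpow_add two_pos]
  push_cast
  ring_nf

lemma norm_lowPass_le {α : ℝ} (hα : 0 < α) (hχ : IsLPCutoff χ) {f : 𝓢(E3, ℂ)} {A : ℝ}
    (hA : ∀ j : ℤ, ∀ x, ‖Dproj χ j f x‖ ≤ A * (2 : ℝ) ^ ((j : ℝ) * α)) (N : ℤ) (x : E3) :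
    ‖lowPass χ N f x‖ ≤ A * ((2 : ℝ) ^ α - 1)⁻¹ * (2 : ℝ) ^ ((N : ℝ) * α) := by
  have hc : 0 < (2 : ℝ) ^ α - 1 := sub_pos.2 (Real.one_lt_rpow one_lt_two hα)
  have hA0 : 0 ≤ A := by
    have := (norm_nonneg _).trans (hA 0 0)
    simpa using this
  have key : ∀ k : ℕ, ‖lowPass χ N f x‖ ≤ ‖lowPass χ (N - k) f x‖ +
      A * ((2 : ℝ) ^ α - 1)⁻¹ * ((2 : ℝ) ^ ((N : ℝ) * α) - (2 : ℝ) ^ (((N - k : ℤ) : ℝ) * α)) := by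
    intro k
    induction k with
    | zero => simp
    | succ k ih =>
      have h1 := hA (N - (k + 1 : ℕ)) x
      have e : N - (k : ℤ) = (N - (k + 1 : ℕ)) + 1 := by push_cast; ring
      rw [e, rpow_int_add_one_mul] at ih
      rw [Dproj_eq hχ, sub_apply] at h1
      have h2 := norm_sub_norm_le (lowPass χ (N - (k + 1 : ℕ) + 1) f x)
        (lowPass χ (N - (k + 1 : ℕ)) f x)
      have h3 : A * (2 : ℝ) ^ (((N - (k + 1 : ℕ) : ℤ) : ℝ) * α) =
          A * ((2 : ℝ) ^ α - 1)⁻¹ * ((2 : ℝ) ^ (((N - (k + 1 : ℕ) : ℤ) : ℝ) * α) * (2 : ℝ) ^ α -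
            (2 : ℝ) ^ (((N - (k + 1 : ℕ) : ℤ) : ℝ) * α)) := by
        field_simp
      rw [h3] at h1
      linarith
  have hlim : Tendsto (fun k : ℕ => ‖lowPass χ (N - k) f x‖ +
      A * ((2 : ℝ) ^ α - 1)⁻¹ * (2 : ℝ) ^ ((N : ℝ) * α)) atTop
      (𝓝 (0 + A * ((2 : ℝ) ^ α - 1)⁻¹ * (2 : ℝ) ^ ((N : ℝ) * α))) := by
    refine Tendsto.add_const _ ?_
    simpa using (tendsto_lowPass_sub_nat hχ N f x).norm
  rw [zero_add] at hlim
  refine ge_of_tendsto' hlim fun k => (key k).trans ?_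
  have : 0 ≤ (2 : ℝ) ^ (((N - k : ℤ) : ℝ) * α) := by positivity
  gcongr
  linarith

end LowPass

section Trilinear

variable {χ : E3 → ℝ}

lemma norm_integral_mul_mul_le_right {a b c : 𝓢(E3, ℂ)} {L : ℝ} (hL : ∀ x, ‖c x‖ ≤ L) :
    ‖∫ x, a x * b x * c x‖ ≤ L * l2norm b * l2norm a := by
  simpa only [mul_comm, mul_left_comm] using norm_integral_mul_mul_le (b := b) (c := a) hL

lemma norm_integral_mul_mul_le_mid {a b c : 𝓢(E3, ℂ)} {L : ℝ} (hL : ∀ x, ‖b x‖ ≤ L) :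
    ‖∫ x, a x * b x * c x‖ ≤ L * l2norm a * l2norm c := by
  simpa only [mul_comm, mul_left_comm] using norm_integral_mul_mul_le (b := a) (c := c) hL

lemma integral_mul_mul_sub_integral (a a' b c c' : 𝓢(E3, ℂ)) :
    (∫ x, a x * b x * c x) - ∫ x, a' x * b x * c' x =
      (∫ x, (a - a') x * b x * c x) + ∫ x, a' x * b x * (c - c') x := by
  rw [← integral_sub (integrable_mul_mul _ _ _) (integrable_mul_mul _ _ _),
    ← integral_add (integrable_mul_mul _ _ _) (integrable_mul_mul _ _ _)]
  congr 1
  ext x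
  rw [sub_apply, sub_apply]
  ring

lemma tendsto_integral_lowPass (hχ : IsLPCutoff χ) (f m g : 𝓢(E3, ℂ)) (J : ℤ) :
    Tendsto (fun k : ℕ => ∫ x, lowPass χ (J + k) f x * m x * lowPass χ (J + k) g x) atTop
      (𝓝 (∫ x, f x * m x * g x)) := by
  have hm : ∀ x, ‖m x‖ ≤ SchwartzMap.seminorm ℝ 0 0 m := SchwartzMap.norm_le_seminorm ℝ m
  set M := SchwartzMap.seminorm ℝ 0 0 m
  have hM : 0 ≤ M := (norm_nonneg _).trans (hm 0)
  have hg0 := l2norm_nonneg g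
  have hf0 := l2norm_nonneg f
  rw [tendsto_iff_norm_sub_tendsto_zero]
  have hpow : Tendsto (fun k : ℕ => (2 : ℝ) ^ (-(J + k : ℤ))) atTop (𝓝 0) := by
    have : ∀ k : ℕ, (2 : ℝ) ^ (-(J + k : ℤ)) = (2 : ℝ) ^ (-J) * ((1 / 2 : ℝ) ^ k) := by
      intro k
      rw [neg_add, zpow_add₀ two_ne_zero, zpow_neg _ (k : ℤ), zpow_natCast, one_div, inv_pow]
    simp only [this]
    simpa using (tendsto_pow_atTop_nhds_zero_of_lt_one (by norm_num : (0 : ℝ) ≤ 1 / 2)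
      (by norm_num)).const_mul ((2 : ℝ) ^ (-J))
  have hlim := hpow.mul_const
    (M * (2 * gradNorm f) * l2norm g + M * l2norm f * (2 * gradNorm g))
  rw [zero_mul] at hlim
  refine squeeze_zero (fun _ => norm_nonneg _) (fun k => ?_) hlim
  rw [integral_mul_mul_sub_integral]
  have h1 := l2norm_lowPass_sub_le hχ (J + k) f
  have h2 := l2norm_lowPass_sub_le hχ (J + k) g
  have h3 := l2norm_lowPass_le hχ (J + k) g
  calc _ ≤ _ := norm_add_le _ _
    _ ≤ M * l2norm (lowPass χ (J + k) f - f) * l2norm (lowPass χ (J + k) g) +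
        M * l2norm f * l2norm (lowPass χ (J + k) g - g) :=
      add_le_add (norm_integral_mul_mul_le_mid hm) (norm_integral_mul_mul_le_mid hm)
    _ ≤ M * (2 * (2 : ℝ) ^ (-(J + k : ℤ)) * gradNorm f) * l2norm g +
        M * l2norm f * (2 * (2 : ℝ) ^ (-(J + k : ℤ)) * gradNorm g) := by
      have := l2norm_nonneg (lowPass χ (J + k) f - f)
      have := l2norm_nonneg (lowPass χ (J + k) g)
      have := gradNorm_nonneg f
      gcongr
    _ = _ := by ring

lemma l2norm_lowPass_succ_sub_le (hχ : IsLPCutoff χ) (N : ℤ) (f : 𝓢(E3, ℂ)) :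
    l2norm (lowPass χ (N + 1) f - lowPass χ N f) ≤ 4 * (2 : ℝ) ^ (-N) * gradNorm f := by
  have h := l2norm_sub_le (lowPass χ (N + 1) f) f (lowPass χ N f)
  have h1 := l2norm_lowPass_sub_le hχ (N + 1) f
  have h2 := l2norm_lowPass_sub_le hχ N f
  have h3 : (2 : ℝ) ^ (-(N + 1)) = (2 : ℝ) ^ (-N) / 2 := by
    rw [neg_add, zpow_add₀ two_ne_zero, zpow_neg_one]
    ring
  have := mul_nonneg (zpow_pos (two_pos (α := ℝ)) (-N)).le (gradNorm_nonneg f)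
  rw [h3] at h1
  nlinarith

lemma norm_integral_lowPass_succ_sub_le {α : ℝ} (hα : 0 < α) (hα1 : α < 1) (hχ : IsLPCutoff χ)
    {f m g : 𝓢(E3, ℂ)} {A e d : ℝ}
    (hf : ∀ j : ℤ, ∀ x, ‖Dproj χ j f x‖ ≤ A * (2 : ℝ) ^ ((j : ℝ) * α))
    (hg : ∀ j : ℤ, ∀ x, ‖Dproj χ j g x‖ ≤ A * (2 : ℝ) ^ ((j : ℝ) * α))
    (hm : l2norm m ≤ e) (hfd : gradNorm f ≤ d) (hgd : gradNorm g ≤ d) (N : ℤ) :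
    ‖(∫ x, lowPass χ (N + 1) f x * m x * lowPass χ (N + 1) g x) -
        ∫ x, lowPass χ N f x * m x * lowPass χ N g x‖ ≤
      12 * A * ((2 : ℝ) ^ α - 1)⁻¹ * d * e * (2 : ℝ) ^ ((N : ℝ) * (α - 1)) := by
  have hc : 0 < (2 : ℝ) ^ α - 1 := sub_pos.2 (Real.one_lt_rpow one_lt_two hα)
  have hA0 : 0 ≤ A := by simpa using (norm_nonneg _).trans (hf 0 0)
  have h2a : (2 : ℝ) ^ α ≤ 2 := by
    simpa using Real.rpow_le_rpow_of_exponent_le one_le_two hα1.le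
  have hm0 := l2norm_nonneg m
  have hf0 := gradNorm_nonneg f
  have hsplit : (2 : ℝ) ^ ((N : ℝ) * (α - 1)) = (2 : ℝ) ^ ((N : ℝ) * α) * (2 : ℝ) ^ (-N) := by
    rw [← Real.rpow_intCast, ← Real.rpow_add two_pos]
    push_cast
    ring_nf
  have hb : ∀ h : 𝓢(E3, ℂ), gradNorm h ≤ d →
      l2norm (lowPass χ (N + 1) h - lowPass χ N h) ≤ 4 * (2 : ℝ) ^ (-N) * d := fun h hh =>
    (l2norm_lowPass_succ_sub_le hχ N h).trans (by gcongr)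
  rw [integral_mul_mul_sub_integral, hsplit]
  have n1 := l2norm_nonneg (lowPass χ (N + 1) f - lowPass χ N f)
  have n2 := l2norm_nonneg (lowPass χ (N + 1) g - lowPass χ N g)
  have hd0 : 0 ≤ d := hf0.trans hfd
  calc _ ≤ _ := norm_add_le _ _
    _ ≤ A * ((2 : ℝ) ^ α - 1)⁻¹ * (2 : ℝ) ^ (((N + 1 : ℤ) : ℝ) * α) * l2norm m *
          l2norm (lowPass χ (N + 1) f - lowPass χ N f) +
        A * ((2 : ℝ) ^ α - 1)⁻¹ * (2 : ℝ) ^ ((N : ℝ) * α) * l2norm m *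
          l2norm (lowPass χ (N + 1) g - lowPass χ N g) :=
      add_le_add (norm_integral_mul_mul_le_right (norm_lowPass_le hα hχ hg _))
        (norm_integral_mul_mul_le (norm_lowPass_le hα hχ hf _))
    _ ≤ A * ((2 : ℝ) ^ α - 1)⁻¹ * ((2 : ℝ) ^ ((N : ℝ) * α) * 2) * e * (4 * (2 : ℝ) ^ (-N) * d) +
        A * ((2 : ℝ) ^ α - 1)⁻¹ * (2 : ℝ) ^ ((N : ℝ) * α) * e * (4 * (2 : ℝ) ^ (-N) * d) := by
      rw [rpow_int_add_one_mul]
      have he : 0 ≤ e := hm0.trans hm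
      have := hb f hfd
      have := hb g hgd
      gcongr
    _ = _ := by ring

/-- The constant in the trilinear estimate `norm_integral_trilinear_le`. -/
def trilinearConst (α : ℝ) : ℝ :=
  12 * ((2 : ℝ) ^ α - 1)⁻¹ * (1 - (2 : ℝ) ^ (α - 1))⁻¹

lemma trilinearConst_pos {α : ℝ} (hα : 0 < α) (hα1 : α < 1) : 0 < trilinearConst α := by
  have hc : 0 < (2 : ℝ) ^ α - 1 := sub_pos.2 (Real.one_lt_rpow one_lt_two hα)
  have hr : 0 < 1 - (2 : ℝ) ^ (α - 1) :=
    sub_pos.2 (Real.rpow_lt_one_of_one_lt_of_neg one_lt_two (by linarith))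
  unfold trilinearConst
  positivity

/-- The product of two Schwartz functions with Littlewood–Paley blocks of size `A 2^{jα}` tested
against an `L²` function, split at the frequency `2^J`. -/
lemma norm_integral_trilinear_le {α : ℝ} (hα : 0 < α) (hα1 : α < 1) (hχ : IsLPCutoff χ)
    {f m g : 𝓢(E3, ℂ)} {A e d : ℝ}
    (hf : ∀ j : ℤ, ∀ x, ‖Dproj χ j f x‖ ≤ A * (2 : ℝ) ^ ((j : ℝ) * α))
    (hg : ∀ j : ℤ, ∀ x, ‖Dproj χ j g x‖ ≤ A * (2 : ℝ) ^ ((j : ℝ) * α))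
    (hm : l2norm m ≤ e) (hge : l2norm g ≤ e) (hfd : gradNorm f ≤ d) (hgd : gradNorm g ≤ d)
    (J : ℤ) :
    ‖∫ x, f x * m x * g x‖ ≤ trilinearConst α * A *
      ((2 : ℝ) ^ ((J : ℝ) * α) * e ^ 2 + (2 : ℝ) ^ ((J : ℝ) * (α - 1)) * (d * e)) := by
  have hc : 0 < (2 : ℝ) ^ α - 1 := sub_pos.2 (Real.one_lt_rpow one_lt_two hα)
  have hr : 0 < 1 - (2 : ℝ) ^ (α - 1) :=
    sub_pos.2 (Real.rpow_lt_one_of_one_lt_of_neg one_lt_two (by linarith))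
  have hr1 : 1 - (2 : ℝ) ^ (α - 1) ≤ 1 := by
    have : 0 ≤ (2 : ℝ) ^ (α - 1) := by positivity
    linarith
  have hA0 : 0 ≤ A := by simpa using (norm_nonneg _).trans (hf 0 0)
  have he : 0 ≤ e := (l2norm_nonneg m).trans hm
  have hd : 0 ≤ d := (gradNorm_nonneg f).trans hfd
  set B : ℤ → ℂ := fun N => ∫ x, lowPass χ N f x * m x * lowPass χ N g x with hB
  have hJ : ‖B J‖ ≤ A * ((2 : ℝ) ^ α - 1)⁻¹ * (2 : ℝ) ^ ((J : ℝ) * α) * e * e := by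
    refine (norm_integral_mul_mul_le (norm_lowPass_le hα hχ hf J)).trans ?_
    have := (l2norm_lowPass_le hχ J g).trans hge
    have := l2norm_nonneg (lowPass χ J g)
    gcongr
  set D := 12 * A * ((2 : ℝ) ^ α - 1)⁻¹ * d * e * (1 - (2 : ℝ) ^ (α - 1))⁻¹ with hD
  have hD0 : 0 ≤ D := by positivity
  have key : ∀ k : ℕ, ‖B (J + k)‖ ≤ ‖B J‖ +
      D * ((2 : ℝ) ^ ((J : ℝ) * (α - 1)) - (2 : ℝ) ^ (((J + k : ℤ) : ℝ) * (α - 1))) := by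
    intro k
    induction k with
    | zero => simp
    | succ k ih =>
      have h1 : ‖B (J + k + 1) - B (J + k)‖ ≤ _ :=
        norm_integral_lowPass_succ_sub_le hα hα1 hχ hf hg hm hfd hgd (J + k)
      have h2 := norm_sub_norm_le (B (J + k + 1)) (B (J + k))
      have h3 : 12 * A * ((2 : ℝ) ^ α - 1)⁻¹ * d * e * (2 : ℝ) ^ (((J + k : ℤ) : ℝ) * (α - 1)) =
          D * ((2 : ℝ) ^ (((J + k : ℤ) : ℝ) * (α - 1)) -
            (2 : ℝ) ^ (((J + k : ℤ) : ℝ) * (α - 1)) * (2 : ℝ) ^ (α - 1)) := by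
        rw [hD]
        field_simp
      rw [h3] at h1
      have e1 : J + ((k + 1 : ℕ) : ℤ) = J + k + 1 := by push_cast; ring
      rw [e1, rpow_int_add_one_mul]
      linarith
  have hlim := (tendsto_integral_lowPass hχ f m g J).norm
  refine le_of_tendsto' hlim fun k => (key k).trans ?_
  have h4 : 0 ≤ (2 : ℝ) ^ (((J + k : ℤ) : ℝ) * (α - 1)) := by positivity
  have h5 : ((2 : ℝ) ^ α - 1)⁻¹ ≤ trilinearConst α := by
    have : 1 ≤ (1 - (2 : ℝ) ^ (α - 1))⁻¹ := (one_le_inv₀ hr).2 hr1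
    have h6 : 0 < ((2 : ℝ) ^ α - 1)⁻¹ := inv_pos.2 hc
    unfold trilinearConst
    nlinarith
  calc _ ≤ A * ((2 : ℝ) ^ α - 1)⁻¹ * (2 : ℝ) ^ ((J : ℝ) * α) * e * e +
        D * (2 : ℝ) ^ ((J : ℝ) * (α - 1)) := by
        gcongr
        linarith
    _ ≤ A * trilinearConst α * (2 : ℝ) ^ ((J : ℝ) * α) * e * e +
        D * (2 : ℝ) ^ ((J : ℝ) * (α - 1)) := by gcongr
    _ = _ := by rw [hD, trilinearConst]; ring

end Trilinear

section FixedTime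

lemma pd_eq (i : Fin 3) (f : 𝓢(E3, ℝ)) : pd i ⇑f = ⇑(∂_{basisVec i} f : 𝓢(E3, ℝ)) := rfl

lemma lineDerivOp_comm (a b : E3) (f : 𝓢(E3, ℝ)) : ∂_{a} (∂_{b} f) = ∂_{b} (∂_{a} f) := by
  have hd : ∀ (v : E3) (x w : E3),
      ∂_{w} (∂_{v} f) x = fderiv ℝ (fderiv ℝ f) x w v := by
    intro v x w
    have hf : DifferentiableAt ℝ (fderiv ℝ f) x :=
      ((f.smooth 2).fderiv_right (m := 1) le_rfl).differentiable (by simp) x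
    have h := hf.hasFDerivAt.clm_apply (hasFDerivAt_const v x)
    rw [SchwartzMap.lineDerivOp_apply_eq_fderiv]
    have e : ⇑(∂_{v} f : 𝓢(E3, ℝ)) = fun y => fderiv ℝ f y v := rfl
    rw [e, h.fderiv]
    simp
  ext x
  rw [hd, hd]
  have hf : DifferentiableAt ℝ (fderiv ℝ f) x :=
    ((f.smooth 2).fderiv_right (m := 1) le_rfl).differentiable (by simp) x
  exact second_derivative_symmetric (fun y => f.hasFDerivAt y) hf.hasFDerivAt a b

/-- The pointwise product of two real Schwartz functions. -/
def schwartzMul (f g : 𝓢(E3, ℝ)) : 𝓢(E3, ℝ) :=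
  SchwartzMap.pairing (ContinuousLinearMap.mul ℝ ℝ) f g

lemma schwartzMul_apply (f g : 𝓢(E3, ℝ)) (x : E3) : schwartzMul f g x = f x * g x := rfl

lemma lineDerivOp_schwartzMul (v : E3) (f g : 𝓢(E3, ℝ)) (x : E3) :
    ∂_{v} (schwartzMul f g) x = f x * ∂_{v} g x + ∂_{v} f x * g x := by
  have h := (f.hasFDerivAt x).mul (g.hasFDerivAt x)
  have e : ⇑(schwartzMul f g) = ⇑f * ⇑g := rfl
  simp only [SchwartzMap.lineDerivOp_apply_eq_fderiv, e, h.fderiv]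
  simp [mul_comm]

lemma integrable_mul_schwartz (f g : 𝓢(E3, ℝ)) : Integrable fun x => f x * g x :=
  (schwartzMul f g).integrable

/-- The vorticity of a Schwartz vector field, as a Schwartz vector field. -/
def vort (u : Fin 3 → 𝓢(E3, ℝ)) : Fin 3 → 𝓢(E3, ℝ) :=
  ![∂_{basisVec 1} (u 2) - ∂_{basisVec 2} (u 1),
    ∂_{basisVec 2} (u 0) - ∂_{basisVec 0} (u 2),
    ∂_{basisVec 0} (u 1) - ∂_{basisVec 1} (u 0)]

lemma curlS_eq (u : Fin 3 → 𝓢(E3, ℝ)) (i : Fin 3) : curlS u i = ⇑(vort u i) := by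
  fin_cases i <;> rfl

/-- The velocity field is divergence free. -/
def DivFree (u : Fin 3 → 𝓢(E3, ℝ)) : Prop :=
  ∀ x, ∑ i : Fin 3, ∂_{basisVec i} (u i) x = 0

/-- The right-hand side `Δu - (u·∇)u - ∇p` of the momentum equation. -/
def momentumRhs (u : Fin 3 → 𝓢(E3, ℝ)) (p : 𝓢(E3, ℝ)) (j : Fin 3) : 𝓢(E3, ℝ) :=
  (∑ i, ∂_{basisVec i} (∂_{basisVec i} (u j))) - (∑ i, schwartzMul (u i) (∂_{basisVec i} (u j)))
    - ∂_{basisVec j} p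

lemma schwartz_lineDerivOp_sub (v : E3) (f g : 𝓢(E3, ℝ)) :
    ∂_{v} (f - g) = ∂_{v} f - ∂_{v} g :=
  map_sub (LineDeriv.lineDerivOpCLM ℝ 𝓢(E3, ℝ) v) f g

/-- The vorticity equation: the curl of `Δu - (u·∇)u - ∇p` is `Δω - (u·∇)ω + (ω·∇)u`. -/
lemma vort_momentumRhs {u : Fin 3 → 𝓢(E3, ℝ)} (hu : DivFree u) (p : 𝓢(E3, ℝ)) (k : Fin 3)
    (x : E3) :
    vort (momentumRhs u p) k x = (∑ i, ∂_{basisVec i} (∂_{basisVec i} (vort u k)) x)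
      - (∑ i, u i x * ∂_{basisVec i} (vort u k) x)
      + ∑ i, vort u i x * ∂_{basisVec i} (u k) x := by
  have h := hu x
  simp only [Fin.sum_univ_three] at h
  have c10 := fun f => lineDerivOp_comm (basisVec 1) (basisVec 0) f
  have c20 := fun f => lineDerivOp_comm (basisVec 2) (basisVec 0) f
  have c21 := fun f => lineDerivOp_comm (basisVec 2) (basisVec 1) f
  fin_cases k
  all_goals
    simp [vort, momentumRhs, Fin.sum_univ_three, lineDerivOp_schwartzMul, c10, c20, c21,
      schwartz_lineDerivOp_sub, LineDeriv.lineDerivOp_add]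
  · linear_combination (-(∂_{basisVec 1} (u 2) x) + ∂_{basisVec 2} (u 1) x) * h
  · linear_combination (-(∂_{basisVec 2} (u 0) x) + ∂_{basisVec 0} (u 2) x) * h
  · linear_combination (-(∂_{basisVec 0} (u 1) x) + ∂_{basisVec 1} (u 0) x) * h

end FixedTime

section EnergyIdentities

/-- The `L²` inner product of two real Schwartz functions. -/
def l2inner (f g : 𝓢(E3, ℝ)) : ℝ := ∫ x, f x * g x

lemma l2inner_comm (f g : 𝓢(E3, ℝ)) : l2inner f g = l2inner g f := by
  simp only [l2inner, mul_comm]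

lemma l2inner_add_right (f g h : 𝓢(E3, ℝ)) : l2inner f (g + h) = l2inner f g + l2inner f h := by
  rw [l2inner, l2inner, l2inner,
    ← integral_add (integrable_mul_schwartz f g) (integrable_mul_schwartz f h)]
  simp [mul_add]

lemma l2inner_sub_right (f g h : 𝓢(E3, ℝ)) : l2inner f (g - h) = l2inner f g - l2inner f h := by
  rw [l2inner, l2inner, l2inner,
    ← integral_sub (integrable_mul_schwartz f g) (integrable_mul_schwartz f h)]
  simp [mul_sub]

lemma l2inner_sub_left (f g h : 𝓢(E3, ℝ)) : l2inner (f - g) h = l2inner f h - l2inner g h := by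
  rw [l2inner_comm, l2inner_sub_right, l2inner_comm h, l2inner_comm h]

lemma l2inner_sum_right {ι : Type*} (s : Finset ι) (f : 𝓢(E3, ℝ)) (g : ι → 𝓢(E3, ℝ)) :
    l2inner f (∑ i ∈ s, g i) = ∑ i ∈ s, l2inner f (g i) := by
  simp only [l2inner]
  rw [← integral_finsetSum _ fun i _ => integrable_mul_schwartz f (g i)]
  simp [Finset.mul_sum]

lemma l2norm_sq_eq_l2inner (f : 𝓢(E3, ℝ)) : l2norm f ^ 2 = l2inner f f := by
  rw [l2norm_sq, l2inner]
  simp [sq]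

lemma l2inner_lineDerivOp_right (f g : 𝓢(E3, ℝ)) (v : E3) :
    l2inner f (∂_{v} g) = -l2inner (∂_{v} f) g :=
  SchwartzMap.integral_mul_lineDerivOp_right_eq_neg_left f g v

lemma l2inner_lineDerivOp_swap (f g : 𝓢(E3, ℝ)) (v w : E3) :
    l2inner (∂_{v} f) (∂_{w} g) = l2inner (∂_{w} f) (∂_{v} g) := by
  rw [l2inner_lineDerivOp_right, lineDerivOp_comm, ← l2inner_lineDerivOp_right]

lemma l2inner_laplacian (f : 𝓢(E3, ℝ)) :
    l2inner f (∑ i, ∂_{basisVec i} (∂_{basisVec i} f)) = -gradNorm f ^ 2 := by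
  simp only [l2inner_sum_right, l2inner_lineDerivOp_right f, gradNorm_sq, l2norm_sq_eq_l2inner,
    Finset.sum_neg_distrib]

lemma DivFree.sum_eq_zero {u : Fin 3 → 𝓢(E3, ℝ)} (hu : DivFree u) :
    ∑ i, (∂_{basisVec i} (u i) : 𝓢(E3, ℝ)) = 0 := by
  ext x
  simpa [Fin.sum_univ_three] using hu x

lemma DivFree.l2inner_transport {u : Fin 3 → 𝓢(E3, ℝ)} (hu : DivFree u) (f : 𝓢(E3, ℝ)) :
    l2inner f (∑ i, schwartzMul (u i) (∂_{basisVec i} f)) = 0 := by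
  have key : ∀ i, l2inner f (schwartzMul (u i) (∂_{basisVec i} f))
      = -l2inner f (schwartzMul (u i) (∂_{basisVec i} f))
        - l2inner (schwartzMul f f) (∂_{basisVec i} (u i)) := by
    intro i
    have h1 : l2inner f (schwartzMul (u i) (∂_{basisVec i} f))
        = l2inner (schwartzMul (u i) f) (∂_{basisVec i} f) := by
      simp only [l2inner, schwartzMul_apply]
      congr 1; ext x; ring
    have h2 : (∂_{basisVec i} (schwartzMul (u i) f) : 𝓢(E3, ℝ))
        = schwartzMul (u i) (∂_{basisVec i} f) + schwartzMul (∂_{basisVec i} (u i)) f := by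
      ext x
      rw [lineDerivOp_schwartzMul]; rfl
    have h3 : l2inner f (schwartzMul (∂_{basisVec i} (u i)) f)
        = l2inner (schwartzMul f f) (∂_{basisVec i} (u i)) := by
      simp only [l2inner, schwartzMul_apply]
      congr 1; ext x; ring
    conv_lhs => rw [h1, l2inner_lineDerivOp_right, l2inner_comm, h2, l2inner_add_right, h3]
    ring
  have hs := Finset.sum_congr (rfl : (Finset.univ : Finset (Fin 3)) = _) fun i _ => key i
  rw [Finset.sum_sub_distrib, Finset.sum_neg_distrib, ← l2inner_sum_right, ← l2inner_sum_right,
    hu.sum_eq_zero] at hs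
  have h0 : l2inner (schwartzMul f f) 0 = 0 := by simp [l2inner]
  linarith

lemma DivFree.sum_l2inner_gradient {u : Fin 3 → 𝓢(E3, ℝ)} (hu : DivFree u) (p : 𝓢(E3, ℝ)) :
    ∑ j, l2inner (u j) (∂_{basisVec j} p) = 0 := by
  have h : ∀ j, l2inner (u j) (∂_{basisVec j} p) = -l2inner p (∂_{basisVec j} (u j)) := fun j => by
    rw [l2inner_lineDerivOp_right, l2inner_comm]
  simp only [h, Finset.sum_neg_distrib]
  rw [← l2inner_sum_right, hu.sum_eq_zero]
  simp [l2inner]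

lemma DivFree.sum_l2inner_momentumRhs_nonpos {u : Fin 3 → 𝓢(E3, ℝ)} (hu : DivFree u)
    (p : 𝓢(E3, ℝ)) : ∑ j, l2inner (u j) (momentumRhs u p j) ≤ 0 := by
  simp only [momentumRhs, l2inner_sub_right, l2inner_laplacian, hu.l2inner_transport,
    Finset.sum_sub_distrib, hu.sum_l2inner_gradient, Finset.sum_neg_distrib]
  have : 0 ≤ ∑ j, gradNorm (u j) ^ 2 := by positivity
  simpa using this

/-- For a divergence-free field, `‖∇u‖_{L²} = ‖ω‖_{L²}`. -/
lemma DivFree.sum_l2norm_gradient {u : Fin 3 → 𝓢(E3, ℝ)} (hu : DivFree u) :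
    ∑ i, ∑ j, l2norm (∂_{basisVec i} (u j)) ^ 2 = ∑ k, l2norm (vort u k) ^ 2 := by
  have h : l2inner (∑ i, (∂_{basisVec i} (u i) : 𝓢(E3, ℝ)))
      (∑ i, (∂_{basisVec i} (u i) : 𝓢(E3, ℝ))) = 0 := by
    rw [hu.sum_eq_zero]; simp [l2inner]
  rw [l2inner_sum_right] at h
  simp only [l2inner_comm (∑ i, (∂_{basisVec i} (u i) : 𝓢(E3, ℝ))), l2inner_sum_right] at h
  have hs := fun i j => l2inner_lineDerivOp_swap (u j) (u i) (basisVec i) (basisVec j)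
  have s01 := hs 0 1
  have s02 := hs 0 2
  have s12 := hs 1 2
  have c := fun i j k l => l2inner_comm (∂_{basisVec i} (u j)) (∂_{basisVec k} (u l))
  simp only [l2norm_sq_eq_l2inner, Fin.sum_univ_three, vort, Matrix.cons_val, l2inner_sub_left,
    l2inner_sub_right] at h ⊢
  linarith [c 0 0 1 1, c 0 0 2 2, c 1 1 2 2, c 0 1 1 0, c 0 2 2 0, c 1 2 2 1]

/-- The enstrophy dissipation `‖∇ω‖_{L²}²`. -/
def dissipation (u : Fin 3 → 𝓢(E3, ℝ)) : ℝ := ∑ k, gradNorm (vort u k) ^ 2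

/-- The squared `L²` norm `‖ω‖_{L²}²` of the vorticity. -/
def enstrophy (u : Fin 3 → 𝓢(E3, ℝ)) : ℝ := ∑ k, l2norm (vort u k) ^ 2

lemma DivFree.sum_l2inner_vort_momentumRhs {u : Fin 3 → 𝓢(E3, ℝ)} (hu : DivFree u)
    (p : 𝓢(E3, ℝ)) :
    ∑ k, l2inner (vort u k) (vort (momentumRhs u p) k) = -dissipation u
      + ∑ k, ∑ i, ∫ x, vort u i x * ∂_{basisVec i} (u k) x * vort u k x := by
  have h : ∀ k, vort (momentumRhs u p) k = (∑ i, ∂_{basisVec i} (∂_{basisVec i} (vort u k)))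
      - (∑ i, schwartzMul (u i) (∂_{basisVec i} (vort u k)))
      + ∑ i, schwartzMul (vort u i) (∂_{basisVec i} (u k)) := by
    intro k; ext x
    rw [vort_momentumRhs hu]
    simp only [add_apply, sub_apply, sum_apply, schwartzMul_apply]
  simp only [h, l2inner_add_right, l2inner_sub_right, l2inner_laplacian, hu.l2inner_transport,
    dissipation, sub_zero, Finset.sum_add_distrib, Finset.sum_neg_distrib]
  congr 1
  refine Finset.sum_congr rfl fun k _ => ?_
  rw [l2inner_sum_right]
  refine Finset.sum_congr rfl fun i _ => ?_
  simp only [l2inner, schwartzMul_apply, mul_comm]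

end EnergyIdentities

section Stretching

/-- A real Schwartz function regarded as a complex one. -/
def complexify (f : 𝓢(E3, ℝ)) : 𝓢(E3, ℂ) := SchwartzMap.postcompCLM Complex.ofRealCLM f

lemma complexify_apply (f : 𝓢(E3, ℝ)) (x : E3) : complexify f x = (f x : ℂ) := rfl

lemma lineDerivOp_complexify (v : E3) (f : 𝓢(E3, ℝ)) :
    ∂_{v} (complexify f) = complexify (∂_{v} f) := by
  ext x
  rw [complexify_apply, SchwartzMap.lineDerivOp_apply_eq_fderiv,
    SchwartzMap.lineDerivOp_apply_eq_fderiv]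
  have h := (Complex.ofRealCLM.hasFDerivAt (x := f x)).comp x (f.hasFDerivAt x)
  have e : ⇑(complexify f) = ⇑Complex.ofRealCLM ∘ ⇑f := rfl
  rw [e, h.fderiv]
  rfl

lemma l2norm_complexify (f : 𝓢(E3, ℝ)) : l2norm (complexify f) = l2norm f := by
  simp [l2norm_eq_sqrt, complexify_apply]

lemma gradNorm_complexify (f : 𝓢(E3, ℝ)) : gradNorm (complexify f) = gradNorm f := by
  simp only [gradNorm, lineDerivOp_complexify, l2norm_complexify]

lemma norm_le_of_eLpNorm_top_le {X F : Type*} [TopologicalSpace X] [MeasurableSpace X]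
    [NormedAddCommGroup F] {μ : Measure X} [μ.IsOpenPosMeasure] {f : X → F} (hf : Continuous f)
    {B : ℝ} (hB : 0 ≤ B) (h : eLpNorm f ⊤ μ ≤ ENNReal.ofReal B) (x : X) : ‖f x‖ ≤ B := by
  rw [eLpNorm_exponent_top] at h
  have hae : ∀ᵐ y ∂μ, ‖f y‖ ≤ B := by
    filter_upwards [ae_le_eLpNormEssSup (f := f) (μ := μ)] with y hy
    have := hy.trans h
    rwa [← ofReal_norm, ENNReal.ofReal_le_ofReal_iff hB] at this
  have hc : IsClosed {y | ‖f y‖ ≤ B} := isClosed_le hf.norm continuous_const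
  have := (Measure.dense_of_ae hae).closure_eq
  rw [hc.closure_eq] at this
  exact (this.symm ▸ Set.mem_univ x : x ∈ {y | ‖f y‖ ≤ B})

variable {χ : E3 → ℝ} {α : ℝ}

lemma norm_Dproj_vort_le (hχ : IsLPCutoff χ) {u : Fin 3 → 𝓢(E3, ℝ)} {A : ℝ} (hA0 : 0 ≤ A)
    (hA : vecBesovInf χ (-α) (curlS u) ≤ ENNReal.ofReal A) (i : Fin 3) (j : ℤ) (x : E3) :
    ‖Dproj χ j (complexify (vort u i)) x‖ ≤ A * (2 : ℝ) ^ ((j : ℝ) * α) := by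
  have h : (2 : ℝ≥0∞) ^ ((j : ℝ) * -α) * eLpNorm (Dproj χ j (complexify (vort u i))) ⊤ volume
      ≤ ENNReal.ofReal A := by
    refine le_trans ?_ hA
    have e : (⇑(complexify (vort u i)) : E3 → ℂ) = fun x => ((curlS u i x : ℝ) : ℂ) := by
      rw [curlS_eq]; rfl
    rw [e]
    exact le_iSup₂ (f := fun (i : Fin 3) (j : ℤ) => (2 : ℝ≥0∞) ^ ((j : ℝ) * -α) *
      eLpNorm (Dproj χ j fun x => ((curlS u i x : ℝ) : ℂ)) ⊤ volume) i j
  refine norm_le_of_eLpNorm_top_le (μ := volume) ?_ (by positivity) ?_ x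
  · rw [Dproj_eq hχ]
    exact SchwartzMap.continuous _
  · have e2 : ENNReal.ofReal ((2 : ℝ) ^ ((j : ℝ) * α)) = (2 : ℝ≥0∞) ^ ((j : ℝ) * α) := by
      rw [← ENNReal.ofReal_rpow_of_pos two_pos]; simp
    rw [ENNReal.ofReal_mul hA0, e2]
    calc _ = (2 : ℝ≥0∞) ^ ((j : ℝ) * -α) * eLpNorm (Dproj χ j (complexify (vort u i))) ⊤ volume
          * (2 : ℝ≥0∞) ^ ((j : ℝ) * α) := by
          rw [mul_right_comm, ← ENNReal.rpow_add _ _ (by simp) (by simp)]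
          simp
      _ ≤ _ := by gcongr

/-- The constant in the vortex-stretching estimate. -/
def stretchConst (α : ℝ) : ℝ := 9 * trilinearConst α + 81 * trilinearConst α ^ 2

lemma stretchConst_pos (hα : 0 < α) (hα1 : α < 1) : 0 < stretchConst α := by
  have := trilinearConst_pos hα hα1
  unfold stretchConst
  positivity

lemma enstrophy_nonneg (u : Fin 3 → 𝓢(E3, ℝ)) : 0 ≤ enstrophy u := by
  unfold enstrophy; positivity

lemma dissipation_nonneg (u : Fin 3 → 𝓢(E3, ℝ)) : 0 ≤ dissipation u := by
  unfold dissipation; positivity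

lemma DivFree.stretching_le_of_scale (hα : 0 < α) (hα1 : α < 1) (hχ : IsLPCutoff χ)
    {u : Fin 3 → 𝓢(E3, ℝ)} (hu : DivFree u) {A : ℝ} (hA0 : 0 ≤ A)
    (hA : vecBesovInf χ (-α) (curlS u) ≤ ENNReal.ofReal A) (J : ℤ) :
    ∑ k, ∑ i, ∫ x, vort u i x * ∂_{basisVec i} (u k) x * vort u k x ≤
      9 * trilinearConst α * A * ((2 : ℝ) ^ ((J : ℝ) * α) * √(enstrophy u) ^ 2 +
        (2 : ℝ) ^ ((J : ℝ) * (α - 1)) * (√(dissipation u) * √(enstrophy u))) := by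
  have hE : ∀ k, l2norm (vort u k) ≤ √(enstrophy u) := fun k =>
    Real.le_sqrt_of_sq_le (Finset.single_le_sum (f := fun k => l2norm (vort u k) ^ 2)
      (fun _ _ => sq_nonneg _) (Finset.mem_univ k))
  have hD : ∀ k, gradNorm (vort u k) ≤ √(dissipation u) := fun k =>
    Real.le_sqrt_of_sq_le (Finset.single_le_sum (f := fun k => gradNorm (vort u k) ^ 2)
      (fun _ _ => sq_nonneg _) (Finset.mem_univ k))
  have hG : ∀ i k, l2norm (∂_{basisVec i} (u k) : 𝓢(E3, ℝ)) ≤ √(enstrophy u) := by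
    intro i k
    refine Real.le_sqrt_of_sq_le ?_
    rw [enstrophy, ← hu.sum_l2norm_gradient]
    exact (Finset.single_le_sum (f := fun k => l2norm (∂_{basisVec i} (u k) : 𝓢(E3, ℝ)) ^ 2)
      (fun _ _ => sq_nonneg _) (Finset.mem_univ k)).trans
      (Finset.single_le_sum (f := fun i => ∑ k, l2norm (∂_{basisVec i} (u k) : 𝓢(E3, ℝ)) ^ 2)
      (fun _ _ => by positivity) (Finset.mem_univ i))
  have key : ∀ k i, ∫ x, vort u i x * ∂_{basisVec i} (u k) x * vort u k x ≤
      trilinearConst α * A * ((2 : ℝ) ^ ((J : ℝ) * α) * √(enstrophy u) ^ 2 +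
        (2 : ℝ) ^ ((J : ℝ) * (α - 1)) * (√(dissipation u) * √(enstrophy u))) := by
    intro k i
    have h := norm_integral_trilinear_le hα hα1 hχ (f := complexify (vort u i))
      (m := complexify (∂_{basisVec i} (u k))) (g := complexify (vort u k))
      (norm_Dproj_vort_le hχ hA0 hA i) (norm_Dproj_vort_le hχ hA0 hA k)
      ((l2norm_complexify _).trans_le (hG i k)) ((l2norm_complexify _).trans_le (hE k))
      ((gradNorm_complexify _).trans_le (hD i)) ((gradNorm_complexify _).trans_le (hD k)) J
    simp only [complexify_apply, ← Complex.ofReal_mul, integral_complex_ofReal,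
      Complex.norm_real] at h
    exact (le_abs_self _).trans h
  refine (Finset.sum_le_sum fun k _ => Finset.sum_le_sum fun i _ => key k i).trans (le_of_eq ?_)
  simp only [Finset.sum_const, Finset.card_univ, Fintype.card_fin, nsmul_eq_mul]
  push_cast
  ring

/-- The vortex-stretching term is absorbed by the dissipation up to a multiple of the enstrophy. -/
lemma DivFree.stretching_le (hα : 0 < α) (hα1 : α < 1) (hχ : IsLPCutoff χ)
    {u : Fin 3 → 𝓢(E3, ℝ)} (hu : DivFree u) {A : ℝ} (hA0 : 0 ≤ A)
    (hA : vecBesovInf χ (-α) (curlS u) ≤ ENNReal.ofReal A) :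
    ∑ k, ∑ i, ∫ x, vort u i x * ∂_{basisVec i} (u k) x * vort u k x ≤
      dissipation u + stretchConst α * A ^ (2 / (2 - α)) * enstrophy u := by
  have hE := enstrophy_nonneg u
  have hD := dissipation_nonneg u
  have hC := stretchConst_pos hα hα1
  have hK := trilinearConst_pos hα hα1
  rcases hA0.eq_or_lt with rfl | hApos
  · refine (hu.stretching_le_of_scale hα hα1 hχ le_rfl hA 0).trans ?_
    have : 0 ≤ stretchConst α * (0 : ℝ) ^ (2 / (2 - α)) * enstrophy u := by positivity
    simp only [mul_zero, zero_mul]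
    positivity
  set L := A ^ (1 / (2 - α)) with hL
  have hLpos : 0 < L := by positivity
  have h2α : 2 - α ≠ 0 := by linarith
  have hAL : A = L ^ (2 - α) := by
    rw [hL, ← Real.rpow_mul hA0, one_div_mul_cancel h2α, Real.rpow_one]
  have hL2 : A ^ (2 / (2 - α)) = L ^ 2 := by
    rw [hL, ← Real.rpow_natCast, ← Real.rpow_mul hA0]
    congr 1; push_cast; ring
  obtain ⟨J, hJ1, hJ2⟩ := exists_mem_Ico_zpow hLpos (one_lt_two (α := ℝ))
  refine (hu.stretching_le_of_scale hα hα1 hχ hA0 hA J).trans ?_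
  have b1 : A * (2 : ℝ) ^ ((J : ℝ) * α) ≤ L ^ 2 := by
    have : (2 : ℝ) ^ ((J : ℝ) * α) ≤ L ^ α := by
      rw [Real.rpow_mul two_pos.le, Real.rpow_intCast]
      exact Real.rpow_le_rpow (by positivity) hJ1 hα.le
    calc A * (2 : ℝ) ^ ((J : ℝ) * α) ≤ L ^ (2 - α) * L ^ α := by
          rw [← hAL]; gcongr
      _ = L ^ 2 := by rw [← Real.rpow_add hLpos, ← Real.rpow_natCast]; congr 1; push_cast; ring
  have b2 : A * (2 : ℝ) ^ ((J : ℝ) * (α - 1)) ≤ 2 * L := by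
    have h1 : (2 : ℝ) ^ (((J + 1 : ℤ) : ℝ) * (α - 1)) ≤ L ^ (α - 1) := by
      rw [Real.rpow_mul two_pos.le, Real.rpow_intCast]
      exact Real.rpow_le_rpow_of_nonpos hLpos hJ2.le (by linarith)
    have h2 : (2 : ℝ) ^ (1 - α) ≤ 2 := by
      simpa using Real.rpow_le_rpow_of_exponent_le one_le_two (by linarith : 1 - α ≤ 1)
    calc A * (2 : ℝ) ^ ((J : ℝ) * (α - 1))
        = A * ((2 : ℝ) ^ (((J + 1 : ℤ) : ℝ) * (α - 1)) * (2 : ℝ) ^ (1 - α)) := by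
          rw [← Real.rpow_add two_pos]; congr 2; push_cast; ring
      _ ≤ L ^ (2 - α) * (L ^ (α - 1) * 2) := by rw [← hAL]; gcongr
      _ = 2 * L := by
          rw [← mul_assoc, ← Real.rpow_add hLpos]
          ring_nf
          simp
  rw [hL2]
  have hsE := Real.sq_sqrt hE
  have hsD := Real.sq_sqrt hD
  set e := √(enstrophy u)
  set d := √(dissipation u)
  have he0 : 0 ≤ e := Real.sqrt_nonneg _
  have hd0 : 0 ≤ d := Real.sqrt_nonneg _
  rw [← hsE, ← hsD]
  set K := trilinearConst α
  calc _ = 9 * K * ((A * (2 : ℝ) ^ ((J : ℝ) * α)) * e ^ 2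
        + (A * (2 : ℝ) ^ ((J : ℝ) * (α - 1))) * (d * e)) := by ring
    _ ≤ 9 * K * (L ^ 2 * e ^ 2 + 2 * L * (d * e)) := by gcongr
    _ ≤ _ := by
      rw [stretchConst]
      nlinarith [sq_nonneg (d - 9 * K * L * e)]

end Stretching

section TimeDependence

/-- A time-dependent Schwartz function, jointly smooth on `[0,T) × ℝ³`, all of whose Schwartz
seminorms are locally bounded in time. -/
structure SmoothFamily (T : ℝ) (w : ℝ → 𝓢(E3, ℝ)) : Prop where
  smooth : ContDiffOn ℝ ((⊤ : ℕ∞) : WithTop ℕ∞) (fun tx : ℝ × E3 => w tx.1 tx.2)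
    (Set.Ico 0 T ×ˢ Set.univ)
  locBdd : ∀ k l : ℕ, ∀ t ∈ Set.Ico (0 : ℝ) T, ∃ M : ℝ,
    ∀ᶠ s in 𝓝[Set.Ico 0 T] t, SchwartzMap.seminorm ℝ k l (w s) ≤ M

/-- A time-dependent function on `ℝ³` decaying like `‖x‖⁻⁴` at infinity, locally uniformly in
time. -/
def LocDecay (T : ℝ) (h : ℝ → E3 → ℝ) : Prop :=
  ∀ t ∈ Set.Ico (0 : ℝ) T, ∃ M : ℝ, ∀ᶠ s in 𝓝[Set.Ico 0 T] t,
    ∀ x, |h s x| ≤ M * (1 + ‖x‖) ^ (-4 : ℝ)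

lemma one_add_norm_rpow_le_one (x : E3) : (1 + ‖x‖) ^ (-4 : ℝ) ≤ 1 :=
  Real.rpow_le_one_of_one_le_of_nonpos (by simp) (by norm_num)

namespace LocDecay

variable {T : ℝ} {g h : ℝ → E3 → ℝ}

lemma add (hg : LocDecay T g) (hh : LocDecay T h) : LocDecay T fun s x => g s x + h s x := by
  intro t ht
  obtain ⟨M, hM⟩ := hg t ht
  obtain ⟨N, hN⟩ := hh t ht
  refine ⟨M + N, ?_⟩
  filter_upwards [hM, hN] with s h1 h2 x
  rw [add_mul]
  exact (abs_add_le _ _).trans (add_le_add (h1 x) (h2 x))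

lemma neg (hg : LocDecay T g) : LocDecay T fun s x => -g s x := by
  simpa only [LocDecay, abs_neg] using hg

lemma sub (hg : LocDecay T g) (hh : LocDecay T h) : LocDecay T fun s x => g s x - h s x := by
  simpa only [sub_eq_add_neg] using hg.add hh.neg

lemma sum {ι : Type*} (s : Finset ι) {g : ι → ℝ → E3 → ℝ} (hg : ∀ i, LocDecay T (g i)) :
    LocDecay T fun t x => ∑ i ∈ s, g i t x := by
  classical
  induction s using Finset.induction_on with
  | empty => exact fun t _ => ⟨0, by simp⟩
  | insert a s ha ih =>
    simp only [Finset.sum_insert ha]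
    exact (hg a).add ih

lemma mul (hg : LocDecay T g) (hh : LocDecay T h) : LocDecay T fun s x => g s x * h s x := by
  intro t ht
  obtain ⟨M, hM⟩ := hg t ht
  obtain ⟨N, hN⟩ := hh t ht
  refine ⟨|M| * N, ?_⟩
  filter_upwards [hM, hN] with s h1 h2 x
  have hp : (0 : ℝ) ≤ (1 + ‖x‖) ^ (-4 : ℝ) := by positivity
  have hg1 : |g s x| ≤ |M| :=
    calc |g s x| ≤ M * (1 + ‖x‖) ^ (-4 : ℝ) := h1 x
      _ ≤ |M| * 1 := mul_le_mul (le_abs_self M) (one_add_norm_rpow_le_one x) hp (abs_nonneg M)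
      _ = |M| := mul_one _
  rw [abs_mul, mul_assoc]
  exact mul_le_mul hg1 (h2 x) (abs_nonneg _) (abs_nonneg _)

lemma congr (hg : LocDecay T g) (he : ∀ s ∈ Set.Ico (0 : ℝ) T, ∀ x, h s x = g s x) :
    LocDecay T h := by
  intro t ht
  obtain ⟨M, hM⟩ := hg t ht
  refine ⟨M, ?_⟩
  filter_upwards [hM, self_mem_nhdsWithin] with s h1 h2 x
  rw [he s h2]
  exact h1 x

end LocDecay

lemma integrable_decay (M : ℝ) : Integrable fun x : E3 => M * (1 + ‖x‖) ^ (-4 : ℝ) :=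
  (integrable_one_add_norm (by simp; norm_num)).const_mul M

lemma seminorm_lineDerivOp_le (k l : ℕ) (v : E3) (f : 𝓢(E3, ℝ)) :
    SchwartzMap.seminorm ℝ k l (∂_{v} f) ≤ ‖v‖ * SchwartzMap.seminorm ℝ k (l + 1) f := by
  refine SchwartzMap.seminorm_le_bound ℝ k l _ (by positivity) fun x => ?_
  have e : ⇑(∂_{v} f : 𝓢(E3, ℝ)) = ⇑(ContinuousLinearMap.apply ℝ ℝ v) ∘ fderiv ℝ f := rfl
  have hf : ContDiff ℝ l (fderiv ℝ f) := (f.smooth (l + 1 : ℕ)).fderiv_right (by simp)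
  have hn : ‖ContinuousLinearMap.apply ℝ ℝ v‖ ≤ ‖v‖ :=
    ContinuousLinearMap.opNorm_le_bound _ (norm_nonneg v) fun L => by
      rw [mul_comm]; exact L.le_opNorm v
  have h1 := (ContinuousLinearMap.apply ℝ ℝ v).norm_iteratedFDeriv_comp_left (x := x)
    hf.contDiffAt le_rfl
  rw [norm_iteratedFDeriv_fderiv] at h1
  rw [e]
  calc _ ≤ ‖x‖ ^ k * (‖v‖ * ‖iteratedFDeriv ℝ (l + 1) f x‖) := by
        gcongr
        exact h1.trans (by gcongr)
    _ = ‖v‖ * (‖x‖ ^ k * ‖iteratedFDeriv ℝ (l + 1) f x‖) := by ring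
    _ ≤ _ := by gcongr; exact SchwartzMap.le_seminorm ℝ k (l + 1) f x

lemma hasDerivAt_fderiv_swap {F : ℝ × E3 → ℝ} {t : ℝ} {x : E3} (hF : ContDiffAt ℝ 2 F (t, x))
    (v : E3) :
    HasDerivAt (fun s => fderiv ℝ F (s, x) (0, v)) (fderiv ℝ (fun y => fderiv ℝ F (t, y) (1, 0)) x v)
      t := by
  have hF2 : HasFDerivAt (fderiv ℝ F) (fderiv ℝ (fderiv ℝ F) (t, x)) (t, x) :=
    ((hF.fderiv_right (m := 1) le_rfl).differentiableAt (by simp)).hasFDerivAt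
  have hsymm : fderiv ℝ (fderiv ℝ F) (t, x) (1, 0) (0, v)
      = fderiv ℝ (fderiv ℝ F) (t, x) (0, v) (1, 0) :=
    hF.isSymmSndFDerivAt (by simp) (1, 0) (0, v)
  have h1 : HasFDerivAt (fun y : E3 => (t, y)) (ContinuousLinearMap.inr ℝ ℝ E3) x :=
    hasFDerivAt_prodMk_right t x
  have h2 : HasFDerivAt (fun y : E3 => fderiv ℝ F (t, y))
      (fderiv ℝ (fderiv ℝ F) (t, x) ∘L ContinuousLinearMap.inr ℝ ℝ E3) x := hF2.comp x h1
  have h3 := h2.clm_apply (hasFDerivAt_const ((1 : ℝ), (0 : E3)) x)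
  have h4 : HasDerivAt (fun s : ℝ => (s, x)) ((1 : ℝ), (0 : E3)) t :=
    (hasDerivAt_id t).prodMk (hasDerivAt_const t x)
  have h5 : HasDerivAt (fun s : ℝ => fderiv ℝ F (s, x)) (fderiv ℝ (fderiv ℝ F) (t, x) (1, 0)) t :=
    hF2.comp_hasDerivAt t h4
  rw [h3.fderiv]
  refine (h5.clm_apply (hasDerivAt_const t ((0 : ℝ), v))).congr_deriv ?_
  simp [hsymm]

namespace SmoothFamily

variable {T : ℝ} {w w' : ℝ → 𝓢(E3, ℝ)}

lemma locDecay (hw : SmoothFamily T w) : LocDecay T fun s x => w s x := by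
  intro t ht
  obtain ⟨M, hM⟩ := hw.locBdd 0 0 t ht
  obtain ⟨N, hN⟩ := hw.locBdd 4 0 t ht
  refine ⟨8 * (M + N), ?_⟩
  filter_upwards [hM, hN] with s h1 h2 x
  have a := (SchwartzMap.le_seminorm ℝ 0 0 (w s) x).trans h1
  have b := (SchwartzMap.le_seminorm ℝ 4 0 (w s) x).trans h2
  simp only [pow_zero, one_mul, norm_iteratedFDeriv_zero, Real.norm_eq_abs] at a b
  have hx := norm_nonneg x
  rw [Real.rpow_neg (by positivity), ← div_eq_mul_inv, le_div_iff₀ (by positivity)]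
  have hp : (1 + ‖x‖) ^ (4 : ℝ) ≤ 8 * (1 + ‖x‖ ^ 4) := by
    rw [show (4 : ℝ) = ((4 : ℕ) : ℝ) by norm_num, Real.rpow_natCast]
    nlinarith [sq_nonneg (‖x‖ ^ 2 - 1), sq_nonneg (‖x‖ - 1), sq_nonneg (‖x‖ ^ 2 - ‖x‖)]
  calc |w s x| * (1 + ‖x‖) ^ (4 : ℝ) ≤ |w s x| * (8 * (1 + ‖x‖ ^ 4)) := by gcongr
    _ = 8 * (|w s x| + ‖x‖ ^ 4 * |w s x|) := by ring
    _ ≤ _ := by gcongr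

lemma sub (hw : SmoothFamily T w) (hw' : SmoothFamily T w') :
    SmoothFamily T fun s => w s - w' s where
  smooth := hw.smooth.sub hw'.smooth
  locBdd k l t ht := by
    obtain ⟨M, hM⟩ := hw.locBdd k l t ht
    obtain ⟨N, hN⟩ := hw'.locBdd k l t ht
    refine ⟨M + N, ?_⟩
    filter_upwards [hM, hN] with s h1 h2
    exact (map_sub_le_add _ _ _).trans (add_le_add h1 h2)

lemma lineDerivOp_eq_fderivWithin (hw : SmoothFamily T w) (v : E3) {t : ℝ}
    (ht : t ∈ Set.Ico (0 : ℝ) T) (x : E3) :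
    ∂_{v} (w t) x = fderivWithin ℝ (fun tx : ℝ × E3 => w tx.1 tx.2)
      (Set.Ico 0 T ×ˢ Set.univ) (t, x) (0, v) := by
  have h1 := (hw.smooth.differentiableOn (by simp) (t, x) ⟨ht, Set.mem_univ x⟩).hasFDerivWithinAt
  have h2 : HasFDerivWithinAt (fun y : E3 => (t, y)) (ContinuousLinearMap.inr ℝ ℝ E3)
      Set.univ x := (hasFDerivAt_prodMk_right t x).hasFDerivWithinAt
  have h3 := (h1.comp x h2 fun y _ => ⟨ht, Set.mem_univ y⟩).hasFDerivAt_of_univ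
  rw [SchwartzMap.lineDerivOp_apply_eq_fderiv]
  exact (DFunLike.congr_fun h3.fderiv v)

lemma lineDerivOp (hw : SmoothFamily T w) (v : E3) : SmoothFamily T fun s => ∂_{v} (w s) where
  smooth := by
    have hS : UniqueDiffOn ℝ (Set.Ico (0 : ℝ) T ×ˢ (Set.univ : Set E3)) :=
      (uniqueDiffOn_Ico 0 T).prod uniqueDiffOn_univ
    exact ((hw.smooth.fderivWithin hS (m := ((⊤ : ℕ∞) : WithTop ℕ∞)) (by simp)).clm_apply
      (contDiffOn_const (c := ((0, v) : ℝ × E3)))).congr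
      fun tx htx => hw.lineDerivOp_eq_fderivWithin v htx.1 tx.2
  locBdd k l t ht := by
    obtain ⟨M, hM⟩ := hw.locBdd k (l + 1) t ht
    refine ⟨‖v‖ * M, ?_⟩
    filter_upwards [hM] with s h1
    exact (seminorm_lineDerivOp_le k l v (w s)).trans (by gcongr)

lemma continuousOn_l2norm_sq (hw : SmoothFamily T w) :
    ContinuousOn (fun s => l2norm (w s) ^ 2) (Set.Ico 0 T) := by
  intro t ht
  obtain ⟨M, hM⟩ := (hw.locDecay.mul hw.locDecay) t ht
  simp only [l2norm_sq_eq_l2inner, l2inner]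
  refine continuousWithinAt_of_dominated (bound := fun x => M * (1 + ‖x‖) ^ (-4 : ℝ))
    (Eventually.of_forall fun s => (integrable_mul_schwartz _ _).aestronglyMeasurable) ?_
    (integrable_decay M) (ae_of_all _ fun x => ?_)
  · filter_upwards [hM] with s hs
    exact ae_of_all _ hs
  · have h1 := hw.smooth.continuousOn (t, x) ⟨ht, Set.mem_univ x⟩
    have h2 : ContinuousWithinAt (fun s : ℝ => (s, x)) (Set.Ico 0 T) t := by fun_prop
    have h3 := ContinuousWithinAt.comp (f := fun s : ℝ => (s, x)) h1 h2
      fun s hs => ⟨hs, Set.mem_univ x⟩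
    exact h3.mul h3

lemma hasDerivAt_l2norm_sq (hw : SmoothFamily T w) {g : ℝ → 𝓢(E3, ℝ)}
    (hg : LocDecay T fun s x => g s x)
    (hd : ∀ t ∈ Set.Ioo (0 : ℝ) T, ∀ x, HasDerivAt (fun s => w s x) (g t x) t)
    {t : ℝ} (ht : t ∈ Set.Ioo (0 : ℝ) T) :
    HasDerivAt (fun s => l2norm (w s) ^ 2) (2 * l2inner (w t) (g t)) t := by
  obtain ⟨M, hM⟩ := (hw.locDecay.mul hg) t ⟨ht.1.le, ht.2⟩
  rw [nhdsWithin_eq_nhds.2 (Ico_mem_nhds ht.1 ht.2)] at hM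
  have hs : {s | s ∈ Set.Ioo (0 : ℝ) T ∧ ∀ x, |w s x * g s x| ≤ M * (1 + ‖x‖) ^ (-4 : ℝ)} ∈ 𝓝 t :=
    Filter.Eventually.and (p := fun s => s ∈ Set.Ioo (0 : ℝ) T) (Ioo_mem_nhds ht.1 ht.2) hM
  simp only [l2norm_sq_eq_l2inner, l2inner, ← integral_const_mul]
  refine (hasDerivAt_integral_of_dominated_loc_of_deriv_le hs
    (bound := fun x => 2 * (M * (1 + ‖x‖) ^ (-4 : ℝ)))
    (F := fun s x => w s x * w s x) (F' := fun s x => 2 * (w s x * g s x))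
    (Eventually.of_forall fun s => (integrable_mul_schwartz _ _).aestronglyMeasurable)
    (integrable_mul_schwartz _ _)
    ((integrable_mul_schwartz _ _).const_mul 2).aestronglyMeasurable
    (ae_of_all _ fun x s hs => ?_) ((integrable_decay M).const_mul 2)
    (ae_of_all _ fun x s hs => ?_)).2
  · rw [norm_mul, Real.norm_eq_abs, Real.norm_eq_abs, abs_two]
    exact mul_le_mul_of_nonneg_left (hs.2 x) two_pos.le
  · exact ((hd s hs.1 x).fun_mul (hd s hs.1 x)).congr_deriv (by ring)

/-- Time derivatives and space derivatives commute. -/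
lemma hasDerivAt_lineDerivOp (hw : SmoothFamily T w) {g : ℝ → 𝓢(E3, ℝ)}
    (hd : ∀ t ∈ Set.Ioo (0 : ℝ) T, ∀ x, HasDerivAt (fun s => w s x) (g t x) t)
    (v : E3) {t : ℝ} (ht : t ∈ Set.Ioo (0 : ℝ) T) (x : E3) :
    HasDerivAt (fun s => ∂_{v} (w s) x) (∂_{v} (g t) x) t := by
  obtain ⟨F, hF⟩ : ∃ F : ℝ × E3 → ℝ, F = fun tx => w tx.1 tx.2 := ⟨_, rfl⟩
  have hnhds : ∀ s ∈ Set.Ioo (0 : ℝ) T, ∀ y : E3,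
      Set.Ico (0 : ℝ) T ×ˢ (Set.univ : Set E3) ∈ 𝓝 (s, y) := fun s hs y =>
    prod_mem_nhds (Ico_mem_nhds hs.1 hs.2) univ_mem
  have hC : ∀ y, ContDiffAt ℝ 2 F (t, y) := fun y => by
    rw [hF]
    exact contDiffAt_infty.1 (hw.smooth.contDiffAt (hnhds t ht y)) 2
  have hsp : ∀ s ∈ Set.Ioo (0 : ℝ) T, ∂_{v} (w s) x = fderiv ℝ F (s, x) (0, v) := by
    intro s hs
    rw [hw.lineDerivOp_eq_fderivWithin v ⟨hs.1.le, hs.2⟩ x,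
      fderivWithin_of_mem_nhds (hnhds s hs x), hF]
  have hti : ⇑(g t) = fun y => fderiv ℝ F (t, y) (1, 0) := by
    ext y
    have h1 := ((hC y).differentiableAt (by simp)).hasFDerivAt
    have h2 : HasDerivAt (fun s : ℝ => (s, y)) ((1 : ℝ), (0 : E3)) t :=
      (hasDerivAt_id t).prodMk (hasDerivAt_const t y)
    have h3 : HasDerivAt (F ∘ fun s : ℝ => (s, y)) (fderiv ℝ F (t, y) (1, 0)) t :=
      h1.comp_hasDerivAt t h2
    refine (hd t ht y).unique ?_
    rw [hF] at h3 ⊢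
    exact h3
  rw [SchwartzMap.lineDerivOp_apply_eq_fderiv, hti]
  refine (hasDerivAt_fderiv_swap (hC x) v).congr_of_eventuallyEq ?_
  filter_upwards [Ioo_mem_nhds ht.1 ht.2] with s hs using hsp s hs

end SmoothFamily

end TimeDependence

namespace IsStrongSolution

variable {T : ℝ} {u : ℝ → Fin 3 → 𝓢(E3, ℝ)} {p : ℝ → 𝓢(E3, ℝ)}

lemma smoothFamily_velocity (h : IsStrongSolution T u p) (i : Fin 3) :
    SmoothFamily T fun s => u s i where
  smooth := h.smooth_u i
  locBdd k l t ht := by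
    obtain ⟨ε, hε, M, hM⟩ := h.locBdd_u k l t ht
    refine ⟨M, ?_⟩
    filter_upwards [self_mem_nhdsWithin, mem_nhdsWithin_of_mem_nhds (Metric.ball_mem_nhds t hε)]
      with s hs hst using hM s hs hst i

lemma smoothFamily_pressure (h : IsStrongSolution T u p) : SmoothFamily T p where
  smooth := h.smooth_p
  locBdd k l t ht := by
    obtain ⟨ε, hε, M, hM⟩ := h.locBdd_p k l t ht
    refine ⟨M, ?_⟩
    filter_upwards [self_mem_nhdsWithin, mem_nhdsWithin_of_mem_nhds (Metric.ball_mem_nhds t hε)]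
      with s hs hst using hM s hs hst

lemma smoothFamily_vort (h : IsStrongSolution T u p) (k : Fin 3) :
    SmoothFamily T fun s => vort (u s) k := by
  have d := fun i j => (h.smoothFamily_velocity j).lineDerivOp (basisVec i)
  fin_cases k
  · exact (d 1 2).sub (d 2 1)
  · exact (d 2 0).sub (d 0 2)
  · exact (d 0 1).sub (d 1 0)

lemma isDivFree (h : IsStrongSolution T u p) {t : ℝ} (ht : t ∈ Set.Ico (0 : ℝ) T) :
    DivFree (u t) := h.divFree t ht

lemma locDecay_momentumRhs (h : IsStrongSolution T u p) (j : Fin 3) :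
    LocDecay T fun s x => momentumRhs (u s) (p s) j x := by
  have hu := h.smoothFamily_velocity
  refine (((LocDecay.sum Finset.univ fun i =>
    (((hu j).lineDerivOp (basisVec i)).lineDerivOp (basisVec i)).locDecay).sub
    (LocDecay.sum Finset.univ fun i =>
      (hu i).locDecay.mul ((hu j).lineDerivOp (basisVec i)).locDecay)).sub
    (h.smoothFamily_pressure.lineDerivOp (basisVec j)).locDecay).congr fun s _ x => ?_
  simp only [momentumRhs, sub_apply, sum_apply, schwartzMul_apply]

lemma locDecay_vort_momentumRhs (h : IsStrongSolution T u p) (k : Fin 3) :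
    LocDecay T fun s x => vort (momentumRhs (u s) (p s)) k x := by
  have hu := h.smoothFamily_velocity
  have hw := h.smoothFamily_vort
  exact (((LocDecay.sum Finset.univ fun i =>
    (((hw k).lineDerivOp (basisVec i)).lineDerivOp (basisVec i)).locDecay).sub
    (LocDecay.sum Finset.univ fun i =>
      (hu i).locDecay.mul ((hw k).lineDerivOp (basisVec i)).locDecay)).add
    (LocDecay.sum Finset.univ fun i =>
      (hw i).locDecay.mul ((hu k).lineDerivOp (basisVec i)).locDecay)).congr
    fun s hs x => vort_momentumRhs (h.isDivFree hs) (p s) k x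

lemma hasDerivAt_velocity (h : IsStrongSolution T u p) (j : Fin 3) {t : ℝ}
    (ht : t ∈ Set.Ioo (0 : ℝ) T) (x : E3) :
    HasDerivAt (fun s => u s j x) (momentumRhs (u t) (p t) j x) t := by
  have hF : DifferentiableAt ℝ (fun tx : ℝ × E3 => u tx.1 j tx.2) (t, x) :=
    ((h.smooth_u j).contDiffAt
      (prod_mem_nhds (Ico_mem_nhds ht.1 ht.2) univ_mem)).differentiableAt (by simp)
  have hd : DifferentiableAt ℝ (fun s => u s j x) t :=
    DifferentiableAt.comp (f := fun s : ℝ => (s, x)) t hF (by fun_prop)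
  refine hd.hasDerivAt.congr_deriv ?_
  have := h.eqn t ht x j
  simp only [momentumRhs, sub_apply, sum_apply, schwartzMul_apply]
  simp only [pd_eq] at this
  linarith

lemma hasDerivAt_vort (h : IsStrongSolution T u p) (k : Fin 3) {t : ℝ}
    (ht : t ∈ Set.Ioo (0 : ℝ) T) (x : E3) :
    HasDerivAt (fun s => vort (u s) k x) (vort (momentumRhs (u t) (p t)) k x) t := by
  have d := fun i j => (h.smoothFamily_velocity j).hasDerivAt_lineDerivOp
    (g := fun s => momentumRhs (u s) (p s) j) (fun s hs y => h.hasDerivAt_velocity j hs y)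
    (basisVec i) ht x
  fin_cases k
  · exact (d 1 2).sub (d 2 1)
  · exact (d 2 0).sub (d 0 2)
  · exact (d 0 1).sub (d 1 0)

lemma hasDerivAt_enstrophy (h : IsStrongSolution T u p) {t : ℝ} (ht : t ∈ Set.Ioo (0 : ℝ) T) :
    HasDerivAt (fun s => enstrophy (u s))
      (∑ k, 2 * l2inner (vort (u t) k) (vort (momentumRhs (u t) (p t)) k)) t :=
  HasDerivAt.fun_sum fun k _ => (h.smoothFamily_vort k).hasDerivAt_l2norm_sq
    (h.locDecay_vort_momentumRhs k) (fun _ hs x => h.hasDerivAt_vort k hs x) ht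

lemma continuousOn_enstrophy (h : IsStrongSolution T u p) :
    ContinuousOn (fun s => enstrophy (u s)) (Set.Ico 0 T) :=
  continuousOn_finsetSum _ fun k _ => (h.smoothFamily_vort k).continuousOn_l2norm_sq

/-- The kinetic energy does not increase. -/
lemma sum_l2norm_velocity_le (h : IsStrongSolution T u p) {t : ℝ} (ht : t ∈ Set.Ico (0 : ℝ) T) :
    ∑ j, l2norm (u t j) ^ 2 ≤ ∑ j, l2norm (u 0 j) ^ 2 := by
  have hsub : Set.Icc 0 t ⊆ Set.Ico 0 T := Set.Icc_subset_Ico_right ht.2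
  have hd : ∀ s ∈ Set.Ioo 0 t, HasDerivAt (fun s => ∑ j, l2norm (u s j) ^ 2)
      (∑ j, 2 * l2inner (u s j) (momentumRhs (u s) (p s) j)) s := fun s hs =>
    HasDerivAt.fun_sum fun j _ => (h.smoothFamily_velocity j).hasDerivAt_l2norm_sq
      (h.locDecay_momentumRhs j) (fun _ hs x => h.hasDerivAt_velocity j hs x)
      ⟨hs.1, hs.2.trans ht.2⟩
  refine antitoneOn_of_deriv_nonpos (f := fun s => ∑ j, l2norm (u s j) ^ 2) (convex_Icc 0 t)
    ((continuousOn_finsetSum _ fun j _ =>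
      (h.smoothFamily_velocity j).continuousOn_l2norm_sq).mono hsub) ?_ ?_
    (Set.left_mem_Icc.2 ht.1) (Set.right_mem_Icc.2 ht.1) ht.1
  · rw [interior_Icc]
    exact fun s hs => (hd s hs).differentiableAt.differentiableWithinAt
  · rw [interior_Icc]
    intro s hs
    rw [(hd s hs).deriv, ← Finset.mul_sum]
    have := (h.isDivFree ⟨hs.1.le, hs.2.trans ht.2⟩).sum_l2inner_momentumRhs_nonpos (p s)
    linarith

/-- The differential inequality for the enstrophy. -/
lemma deriv_enstrophy_le {χ : E3 → ℝ} {α : ℝ} (hα : 0 < α) (hα1 : α < 1) (hχ : IsLPCutoff χ)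
    (h : IsStrongSolution T u p) {t : ℝ} (ht : t ∈ Set.Ioo (0 : ℝ) T) {A : ℝ} (hA0 : 0 ≤ A)
    (hA : vecBesovInf χ (-α) (curlS (u t)) ≤ ENNReal.ofReal A) :
    ∑ k, 2 * l2inner (vort (u t) k) (vort (momentumRhs (u t) (p t)) k)
      ≤ 2 * stretchConst α * A ^ (2 / (2 - α)) * enstrophy (u t) := by
  have hu := h.isDivFree ⟨ht.1.le, ht.2⟩
  rw [← Finset.mul_sum, hu.sum_l2inner_vort_momentumRhs]
  have := hu.stretching_le hα hα1 hχ hA0 hA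
  linarith

end IsStrongSolution

section Gronwall

lemma sub_le_toReal_lintegral {g g' : ℝ → ℝ} {b : ℝ → ℝ≥0∞} {t : ℝ} (ht : 0 ≤ t)
    (hc : ContinuousOn g (Set.Icc 0 t)) (hd : ∀ s ∈ Set.Ioo 0 t, HasDerivAt g (g' s) s)
    (hb : ∫⁻ s in Set.Ioo 0 t, b s ≠ ∞) (hle : ∀ s ∈ Set.Ioo 0 t, ENNReal.ofReal (g' s) ≤ b s) :
    g t - g 0 ≤ (∫⁻ s in Set.Ioo 0 t, b s).toReal := by
  set φ : ℝ → ℝ := fun s => max (deriv g s) 0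
  have hφm : Measurable φ := (measurable_deriv g).max measurable_const
  have hφ0 : 0 ≤ φ := fun s => le_max_right _ _
  have hφb : ∫⁻ s in Set.Ioo 0 t, ENNReal.ofReal (φ s) ≤ ∫⁻ s in Set.Ioo 0 t, b s := by
    refine setLIntegral_mono' measurableSet_Ioo fun s hs => ?_
    have e : ENNReal.ofReal (φ s) = ENNReal.ofReal (g' s) := by
      simp only [φ, (hd s hs).deriv, ENNReal.ofReal_max, ENNReal.ofReal_zero, max_zero]
    rw [e]
    exact hle s hs
  have hφi : IntegrableOn φ (Set.Ioo 0 t) := by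
    refine ⟨hφm.aestronglyMeasurable, ?_⟩
    rw [hasFiniteIntegral_iff_ofReal (ae_of_all _ hφ0)]
    exact hφb.trans_lt hb.lt_top
  have h := intervalIntegral.sub_le_integral_of_hasDeriv_right_of_le ht hc
    (fun s hs => (hd s hs).hasDerivWithinAt) ((integrableOn_Icc_iff_integrableOn_Ioo (f := φ)).2 hφi)
    (fun s hs => (hd s hs).deriv.symm.trans_le (le_max_left _ _))
  refine h.trans ?_
  rw [intervalIntegral.integral_of_le ht, integral_Ioc_eq_integral_Ioo,
    integral_eq_lintegral_of_nonneg_ae (ae_of_all _ hφ0)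
      hφm.aestronglyMeasurable]
  exact ENNReal.toReal_mono hb hφb

/-- A form of Grönwall's inequality in which the coefficient `b` need not be measurable and may
take the value `∞`. -/
lemma le_mul_exp_toReal_lintegral {E E' : ℝ → ℝ} {b : ℝ → ℝ≥0∞} {t : ℝ} (ht : 0 ≤ t)
    (hE : ∀ s, 0 ≤ E s) (hc : ContinuousOn E (Set.Icc 0 t))
    (hd : ∀ s ∈ Set.Ioo 0 t, HasDerivAt E (E' s) s) (hb : ∫⁻ s in Set.Ioo 0 t, b s ≠ ∞)
    (hle : ∀ s ∈ Set.Ioo 0 t, ∀ B : ℝ, 0 ≤ B → b s = ENNReal.ofReal B → E' s ≤ B * E s) :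
    E t ≤ E 0 * Real.exp (∫⁻ s in Set.Ioo 0 t, b s).toReal := by
  set I := (∫⁻ s in Set.Ioo 0 t, b s).toReal
  have key : ∀ δ > 0, E t + δ ≤ (E 0 + δ) * Real.exp I := by
    intro δ hδ
    have hpos : ∀ s, 0 < E s + δ := fun s => by linarith [hE s]
    have h := sub_le_toReal_lintegral (g := fun s => Real.log (E s + δ))
      (g' := fun s => E' s / (E s + δ)) ht
      ((hc.add continuousOn_const).log fun s _ => (hpos s).ne')
      (fun s hs => ((hd s hs).add_const δ).log (hpos s).ne') hb fun s hs => by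
        by_cases hs' : b s = ∞
        · simp [hs']
        · have h1 := hle s hs (b s).toReal ENNReal.toReal_nonneg (ENNReal.ofReal_toReal hs').symm
          refine ENNReal.ofReal_le_of_le_toReal ?_
          rw [div_le_iff₀ (hpos s)]
          refine h1.trans (mul_le_mul_of_nonneg_left (by linarith) ENNReal.toReal_nonneg)
    rw [← Real.log_le_log_iff (hpos t) (mul_pos (hpos 0) (Real.exp_pos I)),
      Real.log_mul (hpos 0).ne' (Real.exp_pos I).ne', Real.log_exp]
    linarith
  refine le_of_forall_pos_le_add fun ε hε => ?_
  have h := key (ε / Real.exp I) (by positivity)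
  rw [add_mul, div_mul_cancel₀ _ (Real.exp_pos I).ne'] at h
  have : 0 < ε / Real.exp I := by positivity
  linarith

end Gronwall

section Assembly

lemma eLpNorm_schwartz (f : 𝓢(E3, ℝ)) : eLpNorm f 2 volume = ENNReal.ofReal (l2norm f) := by
  rw [l2norm, SchwartzMap.norm_toLp, ENNReal.ofReal_toReal (f.memLp 2 volume).2.ne]

lemma eLpNorm_schwartz_sq (f : 𝓢(E3, ℝ)) :
    eLpNorm f 2 volume ^ (2 : ℝ) = ENNReal.ofReal (l2norm f ^ 2) := by
  rw [eLpNorm_schwartz, ENNReal.ofReal_rpow_of_nonneg (l2norm_nonneg f) two_pos.le,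
    Real.rpow_two]

lemma vecL2_schwartz (f : Fin 3 → 𝓢(E3, ℝ)) :
    vecL2 (fun i => ⇑(f i)) = ENNReal.ofReal √(∑ i, l2norm (f i) ^ 2) := by
  simp only [vecL2, eLpNorm_schwartz_sq]
  rw [← ENNReal.ofReal_sum_of_nonneg fun _ _ => sq_nonneg _,
    ENNReal.ofReal_rpow_of_nonneg (by positivity) (by norm_num), Real.sqrt_eq_rpow]

lemma vecL2_curlS (u : Fin 3 → 𝓢(E3, ℝ)) :
    vecL2 (curlS u) = ENNReal.ofReal √(enstrophy u) := by
  rw [funext (curlS_eq u), vecL2_schwartz, enstrophy]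

lemma DivFree.gradL2_eq {u : Fin 3 → 𝓢(E3, ℝ)} (hu : DivFree u) :
    gradL2 (fun i => ⇑(u i)) = vecL2 (curlS u) := by
  simp only [gradL2, pd_eq, eLpNorm_schwartz_sq]
  rw [vecL2_curlS, enstrophy, ← hu.sum_l2norm_gradient]
  simp only [← ENNReal.ofReal_sum_of_nonneg fun (_ : Fin 3) _ => sq_nonneg (_ : ℝ)]
  rw [← ENNReal.ofReal_sum_of_nonneg fun _ _ => by positivity,
    ENNReal.ofReal_rpow_of_nonneg (by positivity) (by norm_num), Real.sqrt_eq_rpow]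

lemma IsStrongSolution.enstrophy_le {χ : E3 → ℝ} {α T : ℝ} (hα : 0 < α) (hα1 : α < 1)
    (hχ : IsLPCutoff χ) {u : ℝ → Fin 3 → 𝓢(E3, ℝ)} {p : ℝ → 𝓢(E3, ℝ)}
    (h : IsStrongSolution T u p) (hK : vortBesovIntegral χ α T u < ∞) {t : ℝ}
    (ht : t ∈ Set.Ico (0 : ℝ) T) :
    enstrophy (u t) ≤ enstrophy (u 0) *
      Real.exp (2 * stretchConst α * (vortBesovIntegral χ α T u).toReal) := by
  have hC := stretchConst_pos hα hα1
  set a : ℝ → ℝ≥0∞ := fun τ => vecBesovInf χ (-α) (curlS (u τ)) ^ (2 / (2 - α))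
      + vecBesovInf χ (-1 - α) (curlS (u τ)) ^ (2 / (1 - α))
  set b : ℝ → ℝ≥0∞ := fun τ => ENNReal.ofReal (2 * stretchConst α) * a τ
  have hbi : ∫⁻ s in Set.Ioo 0 t, b s
      ≤ ENNReal.ofReal (2 * stretchConst α) * vortBesovIntegral χ α T u := by
    rw [vortBesovIntegral, ← lintegral_const_mul' _ _ ENNReal.ofReal_ne_top]
    exact lintegral_mono_set (Set.Ioo_subset_Ioo_right ht.2.le)
  have hfin : ENNReal.ofReal (2 * stretchConst α) * vortBesovIntegral χ α T u ≠ ∞ :=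
    ENNReal.mul_ne_top ENNReal.ofReal_ne_top hK.ne
  refine (le_mul_exp_toReal_lintegral (E := fun s => enstrophy (u s)) (b := b) ht.1
    (fun s => enstrophy_nonneg (u s))
    (h.continuousOn_enstrophy.mono (Set.Icc_subset_Ico_right ht.2))
    (fun s hs => h.hasDerivAt_enstrophy ⟨hs.1, hs.2.trans ht.2⟩)
    (hbi.trans_lt hfin.lt_top).ne fun s hs B hB hbB => ?_).trans ?_
  · set N := vecBesovInf χ (-α) (curlS (u s))
    have hq : 0 < 2 / (2 - α) := div_pos two_pos (by linarith)
    have h1 : ENNReal.ofReal (2 * stretchConst α) * N ^ (2 / (2 - α)) ≤ ENNReal.ofReal B := by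
      rw [← hbB]
      exact mul_le_mul_right le_self_add _
    have hN : N ≠ ∞ := by
      intro hN
      rw [hN, ENNReal.top_rpow_of_pos hq, ENNReal.mul_top (by simpa using hC)] at h1
      exact absurd h1 (by simp)
    have h2 := h.deriv_enstrophy_le hα hα1 hχ ⟨hs.1, hs.2.trans ht.2⟩
      (A := N.toReal) ENNReal.toReal_nonneg (ENNReal.ofReal_toReal hN).ge
    refine h2.trans (mul_le_mul_of_nonneg_right ?_ (enstrophy_nonneg _))
    rw [← ENNReal.ofReal_toReal hN, ENNReal.ofReal_rpow_of_nonneg ENNReal.toReal_nonneg hq.le,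
      ← ENNReal.ofReal_mul (by positivity), ENNReal.ofReal_le_ofReal_iff hB] at h1
    exact h1
  · refine mul_le_mul_of_nonneg_left (Real.exp_le_exp.2 ?_) (enstrophy_nonneg _)
    refine (ENNReal.toReal_mono hfin hbi).trans_eq ?_
    rw [ENNReal.toReal_mul, ENNReal.toReal_ofReal (by positivity)]

lemma IsStrongSolution.vecL2_curlS_le {χ : E3 → ℝ} {α T : ℝ} (hα : 0 < α) (hα1 : α < 1)
    (hχ : IsLPCutoff χ) {u : ℝ → Fin 3 → 𝓢(E3, ℝ)} {p : ℝ → 𝓢(E3, ℝ)}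
    (h : IsStrongSolution T u p) (hK : vortBesovIntegral χ α T u < ∞) {t : ℝ}
    (ht : t ∈ Set.Ico (0 : ℝ) T) :
    vecL2 (curlS (u t)) ≤ vecL2 (curlS (u 0)) *
      ENNReal.ofReal (Real.exp (stretchConst α * (vortBesovIntegral χ α T u).toReal)) := by
  rw [vecL2_curlS, vecL2_curlS, ← ENNReal.ofReal_mul (Real.sqrt_nonneg _)]
  refine ENNReal.ofReal_le_ofReal (Real.sqrt_le_iff.2 ⟨by positivity, ?_⟩)
  rw [mul_pow, Real.sq_sqrt (enstrophy_nonneg _), ← Real.exp_nat_mul]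
  refine (h.enstrophy_le hα hα1 hχ hK ht).trans_eq ?_
  push_cast
  ring_nf

end Assembly

/-- **A priori `H¹` bound underlying the blow-up criterion (Theorem 3.1)**: there is a
constant `C > 0`, independent of the solution, such that whenever `(u, p)` is a strong
solution of the Navier–Stokes equations on `[0,T) × ℝ³` with vorticity `ω = curl u` and
`K := ∫₀ᵀ (‖ω(τ)‖_{Ḃ^{-α}_{∞,∞}}^{2/(2-α)} + ‖ω(τ)‖_{Ḃ^{-1-α}_{∞,∞}}^{2/(1-α)}) dτ < ∞`,
then `‖ω(t)‖_{L²} ≤ ‖ω(0)‖_{L²} exp(C K)` and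
`‖u(t)‖_{L²} + ‖∇u(t)‖_{L²} ≤ ‖u(0)‖_{L²} + ‖ω(0)‖_{L²} exp(C K)` for all `t ∈ [0,T)`. -/
theorem blowup_criterion_a_priori_bound
    (χ : E3 → ℝ) (hχ : IsLPCutoff χ) (α T : ℝ) (hα : 0 < α) (hα1 : α < 1) (hT : 0 < T) :
    ∃ C : ℝ, 0 < C ∧
      ∀ (u : ℝ → Fin 3 → 𝓢(E3, ℝ)) (p : ℝ → 𝓢(E3, ℝ)), IsStrongSolution T u p →
        vortBesovIntegral χ α T u < ∞ →
          (∀ t ∈ Set.Ico (0 : ℝ) T,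
            vecL2 (curlS (u t)) ≤ vecL2 (curlS (u 0)) *
              ENNReal.ofReal (Real.exp (C * (vortBesovIntegral χ α T u).toReal))) ∧
          ∀ t ∈ Set.Ico (0 : ℝ) T,
            vecL2 (fun i => ⇑(u t i)) + gradL2 (fun i => ⇑(u t i)) ≤
              vecL2 (fun i => ⇑(u 0 i)) + vecL2 (curlS (u 0)) *
                ENNReal.ofReal (Real.exp (C * (vortBesovIntegral χ α T u).toReal)) := by
  refine ⟨stretchConst α, stretchConst_pos hα hα1, fun u p h hK =>
    ⟨fun t ht => h.vecL2_curlS_le hα hα1 hχ hK ht, fun t ht => add_le_add ?_ ?_⟩⟩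
  · rw [vecL2_schwartz, vecL2_schwartz]
    exact ENNReal.ofReal_le_ofReal (Real.sqrt_le_sqrt (h.sum_l2norm_velocity_le ht))
  · rw [(h.isDivFree ht).gradL2_eq]
    exact h.vecL2_curlS_le hα hα1 hχ hK ht
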